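/- arXiv:2509.13005 — 2 statements merged into one kernel-verified Lean document; each statement's English description precedes it below -/
import Mathlib

section
/- Let d ≥ 1, ν = (ν₁,…,ν_d) ∈ ℕ^d, and 1 ≤ r < ∞. Then the linear span of 𝒢_ν is dense in L^r(ℝ^d; ℂ). -/
/-!
Real isotropic Gaussians without polynomial factor already span a dense subspace. Products of the
functions `x ↦ exp (-|x|² + b · x)` are again real Gaussians, and on the one-point compactification
these functions vanish at infinity and separate points, so by Stone–Weierstrass their products
together with `1` span a dense subspace of the continuous functions there. Multiplication by a fixed
Gaussian `w ∈ L^r` maps these continuous functions continuously into `L^r`, with dense range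
since a compactly supported continuous `g` is the product of `g / w` and `w`; it also turns every
product of Gaussians, including the empty one, into a Gaussian.
-/

open MeasureTheory Filter Complex
open scoped ENNReal

/-- The set of Gaussian wave packets on `ℝ^d`:
`g(x) = a · exp(−(1/2)(x−q)·Q(x−q)) · exp(i p·(x−q))` with `Q = A + iB`,
`A` real symmetric positive definite, `B` real symmetric. -/
def GaussianPacket (d : ℕ) : Set ((Fin d → ℝ) → ℂ) :=
  {g | ∃ (a : ℂ) (p q : Fin d → ℝ) (A B : Matrix (Fin d) (Fin d) ℝ),
    A.PosDef ∧ B.IsSymm ∧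
    ∀ x : Fin d → ℝ, g x =
      a * Complex.exp (-(1/2 : ℂ) *
          ∑ i, ∑ j, ((A i j : ℂ) + Complex.I * (B i j : ℂ)) *
            ((x i : ℂ) - (q i : ℂ)) * ((x j : ℂ) - (q j : ℂ))) *
        Complex.exp (Complex.I * ∑ i, (p i : ℂ) * ((x i : ℂ) - (q i : ℂ)))}

/-- The set `𝒢_ν` of polynomial Gaussian wave packets: products `P · g` with `g` a
Gaussian wave packet and `P` a complex polynomial of degree at most `ν j` in each
variable `x j`. -/
def GaussianPolyPacket (d : ℕ) (ν : Fin d → ℕ) : Set ((Fin d → ℝ) → ℂ) :=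
  {f | ∃ (c : ((i : Fin d) → Fin (ν i + 1)) → ℂ) (g : (Fin d → ℝ) → ℂ),
    g ∈ GaussianPacket d ∧
    ∀ x : Fin d → ℝ, f x =
      (∑ θ : (i : Fin d) → Fin (ν i + 1), c θ * ∏ i, (x i : ℂ) ^ (θ i : ℕ)) * g x}

section WeightedStoneWeierstrass

variable {X K 𝕜 : Type*} [RCLike 𝕜] [TopologicalSpace X] [TopologicalSpace K] [CompactSpace K]

theorem dense_span_closure_of_separatesPoints {s : Set C(K, 𝕜)}
    (hstar : ∀ f ∈ s, star f ∈ s) (hsep : ((⇑) '' s : Set (K → 𝕜)).SeparatesPoints) :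
    Dense (Submodule.span 𝕜 (Submonoid.closure s : Set C(K, 𝕜)) : Set C(K, 𝕜)) := by
  have hunion : s ∪ star s = s :=
    Set.union_eq_left.2 fun f hf => by simpa using hstar (star f) hf
  have hdense := ContinuousMap.starSubalgebra_topologicalClosure_eq_top_of_separatesPoints
    (StarAlgebra.adjoin 𝕜 s)
    fun _ _ hxy =>
      let ⟨f, hf, hfxy⟩ := hsep hxy
      ⟨f, Set.image_mono (StarAlgebra.subset_adjoin 𝕜 s) hf, hfxy⟩
  have hspan : Subalgebra.toSubmodule (StarAlgebra.adjoin 𝕜 s).toSubalgebra =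
      Submodule.span 𝕜 (Submonoid.closure s) := by
    rw [StarAlgebra.adjoin_toSubalgebra, hunion, Algebra.adjoin_eq_span]
  rw [← hspan]
  exact dense_iff_closure_eq.2 (congrArg SetLike.coe hdense)

variable [MeasurableSpace X] {μ : Measure X} {r : ℝ≥0∞} {w : X → 𝕜}

theorem isFiniteMeasureOnCompacts_of_memLp {E : Type*} [NormedAddCommGroup E] {f : X → E}
    (hr0 : r ≠ 0) (hr : r ≠ ∞) (hf : MemLp f r μ) (hfc : Continuous f) (hf0 : ∀ x, f x ≠ 0) :
    IsFiniteMeasureOnCompacts μ where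
  lt_top_of_isCompact S hS := by
    obtain ⟨δ, hδ, hδf⟩ := hS.exists_forall_le' hfc.nnnorm.continuousOn
      fun x _ => nnnorm_pos.2 (hf0 x)
    exact (measure_mono hδf).trans_lt (hf.meas_ge_lt_top hr0 hr hδ.ne')

theorem memLp_onePoint_mul [OpensMeasurableSpace X] (hw : MemLp w r μ) (G : C(OnePoint X, 𝕜)) :
    MemLp (fun x : X => G x * w x) r μ :=
  hw.of_le_mul ((G.continuous.comp OnePoint.continuous_coe).aestronglyMeasurable.mul hw.1)
    (.of_forall fun x => (norm_mul_le _ _).trans <| by gcongr; exact G.norm_coe_le_norm x)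

/-- Multiplication of an `L^r` weight `w` by the continuous functions on the one-point
compactification, as a continuous linear map `G ↦ [G|_X · w]` into `L^r`. Working on `OnePoint X`
rather than with the functions on `X` having a limit at infinity makes Stone–Weierstrass
applicable. -/
noncomputable def onePointMulL [OpensMeasurableSpace X] [Fact (1 ≤ r)] (hw : MemLp w r μ) :
    C(OnePoint X, 𝕜) →L[𝕜] Lp 𝕜 r μ :=
  LinearMap.mkContinuous
    { toFun := fun G => (memLp_onePoint_mul hw G).toLp
      map_add' := fun G H => by
        rw [← MemLp.toLp_add]
        congr 1
        ext x
        exact add_mul _ _ _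
      map_smul' := fun c G => by
        rw [RingHom.id_apply, ← MemLp.toLp_const_smul]
        congr 1
        ext x
        exact mul_assoc _ _ _ }
    ‖hw.toLp‖ fun G => by
      rw [mul_comm]
      refine Lp.norm_le_mul_norm_of_ae_le_mul ?_
      filter_upwards [(memLp_onePoint_mul hw G).coeFn_toLp, hw.coeFn_toLp] with x hGx hwx
      rw [LinearMap.coe_mk, AddHom.coe_mk, hGx, hwx, norm_mul]
      gcongr
      exact G.norm_coe_le_norm x

theorem coeFn_onePointMulL [OpensMeasurableSpace X] [Fact (1 ≤ r)] (hw : MemLp w r μ)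
    (G : C(OnePoint X, 𝕜)) : onePointMulL hw G =ᵐ[μ] fun x : X => G x * w x :=
  (memLp_onePoint_mul hw G).coeFn_toLp

theorem denseRange_onePointMulL [R1Space X] [NormalSpace X] [WeaklyLocallyCompactSpace X]
    [BorelSpace X] [μ.Regular] [Fact (1 ≤ r)] (hr : r ≠ ∞) (hw : MemLp w r μ) (hwc : Continuous w)
    (hw0 : ∀ x, w x ≠ 0) : DenseRange (onePointMulL hw) := by
  refine Metric.dense_iff.2 fun f ε hε => ?_
  obtain ⟨g, hgs, hfg, hgc, -⟩ := (Lp.memLp f).exists_hasCompactSupport_eLpNorm_sub_le hr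
    (ε := ENNReal.ofReal (ε / 2)) (by simpa using hε)
  have hzero : HasCompactSupport fun x => g x * (w x)⁻¹ := hgs.mul_right
  let G : C(OnePoint X, 𝕜) := OnePoint.continuousMapMk
    ⟨fun x => g x * (w x)⁻¹, hgc.mul (hwc.inv₀ hw0)⟩ 0 <| by
      rw [coclosedCompact_eq_cocompact]
      exact hzero.is_zero_at_infty
  have hG : onePointMulL hw G =ᵐ[μ] g :=
    (coeFn_onePointMulL hw G).trans (.of_forall fun x => inv_mul_cancel_right₀ (hw0 x) (g x))
  refine ⟨onePointMulL hw G, ?_, Set.mem_range_self G⟩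
  rw [Metric.mem_ball, dist_comm, Lp.dist_def]
  calc (eLpNorm (⇑f - ⇑(onePointMulL hw G)) r μ).toReal
      = (eLpNorm (⇑f - g) r μ).toReal := by rw [eLpNorm_congr_ae (EventuallyEq.rfl.sub hG)]
    _ ≤ ε / 2 := ENNReal.toReal_le_of_le_ofReal (by positivity) hfg
    _ < ε := half_lt_self hε

theorem dense_span_image_onePointMulL [R1Space X] [NormalSpace X] [WeaklyLocallyCompactSpace X]
    [BorelSpace X] [μ.Regular] [Fact (1 ≤ r)] (hr : r ≠ ∞) (hw : MemLp w r μ)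
    (hwc : Continuous w) (hw0 : ∀ x, w x ≠ 0) {s : Set C(OnePoint X, 𝕜)}
    (hstar : ∀ f ∈ s, star f ∈ s) (hsep : ((⇑) '' s : Set (OnePoint X → 𝕜)).SeparatesPoints) :
    Dense (Submodule.span 𝕜 (onePointMulL hw '' Submonoid.closure s) : Set (Lp 𝕜 r μ)) := by
  have hdense := (denseRange_onePointMulL hr hw hwc hw0).dense_image (onePointMulL hw).continuous
    (dense_span_closure_of_separatesPoints hstar hsep)
  rwa [← ContinuousLinearMap.coe_coe, ← Submodule.map_coe, Submodule.map_span] at hdense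

end WeightedStoneWeierstrass

section Gaussian

variable {ι : Type*} [Fintype ι]

/-- The real Gaussian `x ↦ exp (-t |x|² + b · x)`, viewed as a complex-valued function. In this
uncentered parametrization the product of two Gaussians needs no normalizing constant. -/
noncomputable def realGaussian (t : ℝ) (b x : ι → ℝ) : ℂ :=
  (Real.exp (-t * (x ⬝ᵥ x) + b ⬝ᵥ x) : ℝ)

theorem continuous_realGaussian (t : ℝ) (b : ι → ℝ) : Continuous (realGaussian t b) := by
  unfold realGaussian dotProduct
  fun_prop

theorem realGaussian_ne_zero (t : ℝ) (b x : ι → ℝ) : realGaussian t b x ≠ 0 :=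
  Complex.ofReal_ne_zero.2 (Real.exp_ne_zero _)

theorem realGaussian_zero_zero (x : ι → ℝ) : realGaussian 0 0 x = 1 := by
  simp [realGaussian]

theorem realGaussian_mul (s t : ℝ) (b c x : ι → ℝ) :
    realGaussian s b x * realGaussian t c x = realGaussian (s + t) (b + c) x := by
  simp only [realGaussian, ← Complex.ofReal_mul, ← Real.exp_add, add_dotProduct]
  ring_nf

theorem norm_realGaussian_rpow (t p : ℝ) (b x : ι → ℝ) :
    ‖realGaussian t b x‖ ^ p = ‖realGaussian (p * t) (p • b) x‖ := by
  simp only [realGaussian, Complex.norm_real, Real.norm_of_nonneg (Real.exp_pos _).le,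
    ← Real.exp_mul, smul_dotProduct, smul_eq_mul]
  ring_nf

theorem integrable_realGaussian {t : ℝ} (ht : 0 < t) (b : ι → ℝ) :
    Integrable (realGaussian t b) := by
  convert! GaussianFourier.integrable_cexp_neg_mul_sum_add (b := (t : ℂ)) (by simpa using ht)
    (fun i => (b i : ℂ)) using 2 with x
  simp [realGaussian, dotProduct, pow_two]

theorem memLp_realGaussian {t : ℝ} (ht : 0 < t) (b : ι → ℝ) {r : ℝ≥0∞} (hr0 : r ≠ 0)
    (hr : r ≠ ∞) : MemLp (realGaussian t b) r volume := by
  rw [← integrable_norm_rpow_iff (continuous_realGaussian t b).aestronglyMeasurable hr0 hr]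
  simp only [norm_realGaussian_rpow]
  exact (integrable_realGaussian (mul_pos (ENNReal.toReal_pos hr0 hr) ht) _).norm

theorem neg_mul_dotProduct_self_add_dotProduct {t : ℝ} (ht : t ≠ 0) (b x : ι → ℝ) :
    -t * (x ⬝ᵥ x) + b ⬝ᵥ x =
      (b ⬝ᵥ b) / (4 * t) - t * ((x - (2 * t)⁻¹ • b) ⬝ᵥ (x - (2 * t)⁻¹ • b)) := by
  simp only [sub_dotProduct, dotProduct_sub, smul_dotProduct, dotProduct_smul, smul_eq_mul,
    dotProduct_comm x b]
  field_simp
  ring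

theorem tendsto_dotProduct_self_cocompact :
    Tendsto (fun x : ι → ℝ => x ⬝ᵥ x) (cocompact (ι → ℝ)) atTop := by
  have hnorm : Tendsto (fun x : ι → ℝ => ‖WithLp.toLp 2 x‖) (cocompact (ι → ℝ)) atTop :=
    tendsto_norm_cocompact_atTop.comp
      (EuclideanSpace.equiv ι ℝ).symm.toHomeomorph.isClosedEmbedding.tendsto_cocompact
  refine ((tendsto_pow_atTop two_ne_zero).comp hnorm).congr fun x => ?_
  simp only [Function.comp_apply, EuclideanSpace.real_norm_sq_eq, dotProduct, ← pow_two]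

theorem tendsto_realGaussian_cocompact {t : ℝ} (ht : 0 < t) (b : ι → ℝ) :
    Tendsto (realGaussian t b) (cocompact (ι → ℝ)) (nhds 0) := by
  have hsq := tendsto_dotProduct_self_cocompact.comp
    (Homeomorph.subRight ((2 * t)⁻¹ • b)).isClosedEmbedding.tendsto_cocompact
  have hexponent : Tendsto (fun x => -t * (x ⬝ᵥ x) + b ⬝ᵥ x) (cocompact (ι → ℝ)) atBot := by
    simp only [neg_mul_dotProduct_self_add_dotProduct ht.ne', sub_eq_add_neg]
    exact tendsto_atBot_add_const_left _ _ (tendsto_neg_atTop_atBot.comp (hsq.const_mul_atTop ht))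
  rw [← Complex.ofReal_zero]
  exact (Complex.continuous_ofReal.tendsto 0).comp (Real.tendsto_exp_atBot.comp hexponent)

/-- The Gaussian `realGaussian 1 b`, extended by `0` to the one-point compactification. The products
of these functions span the algebra to which Stone–Weierstrass is applied. -/
noncomputable def onePointGaussian (b : ι → ℝ) : C(OnePoint (ι → ℝ), ℂ) :=
  OnePoint.continuousMapMk ⟨realGaussian 1 b, continuous_realGaussian 1 b⟩ 0 <| by
    rw [coclosedCompact_eq_cocompact]
    exact tendsto_realGaussian_cocompact one_pos b

theorem onePointGaussian_coe (b x : ι → ℝ) :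
    onePointGaussian b (x : OnePoint (ι → ℝ)) = realGaussian 1 b x := rfl

theorem onePointGaussian_infty (b : ι → ℝ) : onePointGaussian b OnePoint.infty = 0 := rfl

theorem star_onePointGaussian (b : ι → ℝ) : star (onePointGaussian b) = onePointGaussian b := by
  ext z
  induction z with
  | infty => simp [onePointGaussian_infty]
  | coe x =>
    simp only [ContinuousMap.star_apply, onePointGaussian_coe, realGaussian, Complex.star_def,
      Complex.conj_ofReal]

theorem eq_of_realGaussian_eq {x y : ι → ℝ}
    (h : realGaussian 1 ((2 : ℝ) • x) y = realGaussian 1 ((2 : ℝ) • x) x) : y = x := by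
  have hexponent := Real.exp_injective (Complex.ofReal_injective h)
  have hsub : (y - x) ⬝ᵥ (y - x) = 0 := by
    simp only [smul_dotProduct, smul_eq_mul] at hexponent
    simp only [sub_dotProduct, dotProduct_sub, dotProduct_comm y x]
    linarith
  exact sub_eq_zero.1 (dotProduct_self_eq_zero.1 hsub)

theorem separatesPoints_onePointGaussian :
    Set.SeparatesPoints ((⇑) '' Set.range (onePointGaussian (ι := ι))) := by
  have hsep (x : ι → ℝ) {z : OnePoint (ι → ℝ)} (hz : z ≠ x) :
      onePointGaussian ((2 : ℝ) • x) z ≠ onePointGaussian ((2 : ℝ) • x) x := by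
    induction z with
    | infty => exact (realGaussian_ne_zero 1 _ x).symm
    | coe y => exact fun h => hz (congrArg _ (eq_of_realGaussian_eq h))
  intro y z hyz
  induction y with
  | coe x => exact ⟨_, ⟨_, ⟨_, rfl⟩, rfl⟩, (hsep x hyz.symm).symm⟩
  | infty =>
    induction z with
    | infty => exact absurd rfl hyz
    | coe x => exact ⟨_, ⟨_, ⟨_, rfl⟩, rfl⟩, hsep x hyz⟩

theorem exists_eq_realGaussian_of_mem_closure {G : C(OnePoint (ι → ℝ), ℂ)}
    (hG : G ∈ Submonoid.closure (Set.range (onePointGaussian (ι := ι)))) :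
    ∃ t : ℝ, 0 ≤ t ∧ ∃ b : ι → ℝ, ∀ x : ι → ℝ, G x = realGaussian t b x := by
  induction hG using Submonoid.closure_induction with
  | mem G hG =>
    obtain ⟨b, rfl⟩ := hG
    exact ⟨1, zero_le_one, b, onePointGaussian_coe b⟩
  | one => exact ⟨0, le_rfl, 0, fun x => (realGaussian_zero_zero x).symm⟩
  | mul G H _ _ ihG ihH =>
    obtain ⟨s, hs, b, hG⟩ := ihG
    obtain ⟨t, ht, c, hH⟩ := ihH
    refine ⟨s + t, add_nonneg hs ht, b + c, fun x => ?_⟩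
    rw [ContinuousMap.mul_apply, hG, hH, realGaussian_mul]

theorem dense_span_realGaussian {μ : Measure (ι → ℝ)} {r : ℝ≥0∞} [hr1 : Fact (1 ≤ r)]
    (hr : r ≠ ∞) {s : ℝ} {c : ι → ℝ} (hμ : MemLp (realGaussian s c) r μ) :
    Dense (Submodule.span ℂ {f : Lp ℂ r μ | ∃ t ≥ s, ∃ b, f =ᵐ[μ] realGaussian t b} :
      Set (Lp ℂ r μ)) := by
  have := isFiniteMeasureOnCompacts_of_memLp (zero_lt_one.trans_le hr1.out).ne' hr hμ
    (continuous_realGaussian s c) (realGaussian_ne_zero s c)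
  have hdense := dense_span_image_onePointMulL hr hμ (continuous_realGaussian s c)
    (realGaussian_ne_zero s c)
    (Set.forall_mem_range.2 fun b => ⟨b, (star_onePointGaussian b).symm⟩)
    separatesPoints_onePointGaussian
  refine hdense.mono (Submodule.span_mono ?_)
  rintro _ ⟨G, hG, rfl⟩
  obtain ⟨t, ht, b, hGb⟩ := exists_eq_realGaussian_of_mem_closure hG
  refine ⟨t + s, le_add_of_nonneg_left ht, b + c, (coeFn_onePointMulL hμ G).trans ?_⟩
  exact .of_forall fun x => by simp only [hGb, realGaussian_mul]

end Gaussian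

theorem realGaussian_mem_gaussianPacket {d : ℕ} {t : ℝ} (ht : 0 < t) (b : Fin d → ℝ) :
    realGaussian t b ∈ GaussianPacket d := by
  refine ⟨(Real.exp ((b ⬝ᵥ b) / (4 * t)) : ℝ), 0, (2 * t)⁻¹ • b,
    (2 * t) • (1 : Matrix (Fin d) (Fin d) ℝ), 0, Matrix.PosDef.one.smul (by positivity),
    Matrix.isSymm_zero, fun x => ?_⟩
  have hquad (y : Fin d → ℂ) : ∑ i, ∑ j, ((((2 * t) • (1 : Matrix (Fin d) (Fin d) ℝ)) i j : ℂ) +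
      Complex.I * ((0 : Matrix (Fin d) (Fin d) ℝ) i j : ℂ)) * y i * y j =
      2 * t * ∑ i, y i * y i := by
    simp [Matrix.one_apply, apply_ite, Finset.mul_sum, mul_assoc]
  rw [hquad, realGaussian, neg_mul_dotProduct_self_add_dotProduct ht.ne', sub_eq_add_neg,
    Real.exp_add]
  simp [dotProduct, mul_assoc]

theorem gaussianPacket_subset_gaussianPolyPacket {d : ℕ} (ν : Fin d → ℕ) :
    GaussianPacket d ⊆ GaussianPolyPacket d ν := by
  refine fun g hg => ⟨Pi.single 0 1, g, hg, fun x => ?_⟩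
  rw [Fintype.sum_eq_single 0 fun θ hθ => by simp [hθ]]
  simp

theorem span_gaussianPolyPacket_dense_in_Lr_general {d : ℕ} (ν : Fin d → ℕ) {r : ℝ≥0∞}
    [Fact (1 ≤ r)] (hr : r ≠ ∞) {μ : Measure (Fin d → ℝ)}
    {s : ℝ} (hs : 0 < s) {c : Fin d → ℝ} (hμ : MemLp (realGaussian s c) r μ) :
    Dense (Submodule.span ℂ {f : Lp ℂ r μ | ∃ g ∈ GaussianPolyPacket d ν, f =ᵐ[μ] g} :
      Set (Lp ℂ r μ)) := by
  refine (dense_span_realGaussian hr hμ).mono (Submodule.span_mono ?_)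
  rintro f ⟨t, ht, b, hf⟩
  exact ⟨_, gaussianPacket_subset_gaussianPolyPacket ν
    (realGaussian_mem_gaussianPacket (hs.trans_le ht) b), hf⟩

/-- For `d ≥ 1`, `ν ∈ ℕ^d` and `1 ≤ r < ∞`, the linear span of the
polynomial Gaussian wave packets `𝒢_ν` is dense in `L^r(ℝ^d; ℂ)`. -/
theorem span_gaussianPolyPacket_dense_in_Lr
    (d : ℕ) (hd : 1 ≤ d) (ν : Fin d → ℕ) (r : ℝ≥0∞) (hr : Fact (1 ≤ r)) (hr' : r ≠ ∞) :
    Dense (↑(Submodule.span ℂ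
      {f : Lp ℂ r (volume : Measure (Fin d → ℝ)) |
        ∃ g ∈ GaussianPolyPacket d ν, (f : (Fin d → ℝ) → ℂ) =ᵐ[volume] g}) :
      Set (Lp ℂ r (volume : Measure (Fin d → ℝ)))) :=
  span_gaussianPolyPacket_dense_in_Lr_general ν hr' one_pos
    (memLp_realGaussian one_pos 0 (zero_lt_one.trans_le hr.out).ne' hr')
end

section
/- Let d ≥ 1, ν ∈ ℕ^d, and 1 ≤ r < ∞. Let (g_k)_{k∈ℕ} be a sequence in 𝒢_ν such that sup_k ‖g_k‖_{L^r(ℝ^d)} < ∞, and suppose there exists g ∈ L¹_loc(ℝ^d; ℂ) such that ∫ g_k φ → ∫ g φ for every smooth compactly supported test function φ : ℝ^d → ℂ. Then either g = 0 almost everywhere, or g is almost everywhere equal to a nonzero element of 𝒢_ν and moreover ‖g_k − g‖_{L^s(ℝ^d)} → 0 as k → ∞ for every 1 ≤ s ≤ ∞. -/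
/-!
After an affine change of variables a packet in `𝒢_ν` is a Schwartz function from a fixed
finite-dimensional family (polynomials times the standard Gaussian), multiplied by a unimodular
quadratic chirp. Along a subsequence the parameters either converge or diverge to infinity.
If the affine maps diverge or become singular, the `L^r` bound forces the mass out of every compact
set disjoint from a null set; if only the chirps diverge, a Riemann–Lebesgue lemma for quadratic
phases applies. In both cases the distributional limit vanishes. So if the limit is nonzero, every
subsequence has a further subsequence with convergent parameters, along which the packets converge
to a packet in every `L^s`.
-/

open MeasureTheory Filter Complex
open scoped ENNReal

open scoped Topology SchwartzMap

theorem exists_subseq_tendsto_or_normalized {X : Type*} [NormedAddCommGroup X] [NormedSpace ℝ X]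
    [ProperSpace X] (x : ℕ → X) :
    ∃ φ : ℕ → ℕ, StrictMono φ ∧ ((∃ a, Tendsto (fun k => x (φ k)) atTop (𝓝 a)) ∨
      (Tendsto (fun k => ‖x (φ k)‖) atTop atTop ∧
        ∃ a, a ≠ 0 ∧ Tendsto (fun k => ‖x (φ k)‖⁻¹ • x (φ k)) atTop (𝓝 a))) := by
  by_cases h : ∃ C, ∃ᶠ k in atTop, ‖x k‖ ≤ C
  · obtain ⟨C, hC⟩ := h
    obtain ⟨a, -, φ, hφ, ha⟩ := tendsto_subseq_of_frequently_bounded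
      (Metric.isBounded_closedBall (x := (0 : X)) (r := C)) (x := x) (by simpa using hC)
    exact ⟨φ, hφ, Or.inl ⟨a, ha⟩⟩
  · have htop : Tendsto (fun k => ‖x k‖) atTop atTop := by
      refine tendsto_atTop.mpr fun C => ?_
      have := not_frequently.mp (not_exists.mp h C)
      exact this.mono fun k hk => (not_le.mp hk).le
    obtain ⟨a, ha, φ, hφ, hlim⟩ := (isCompact_sphere (0 : X) 1).tendsto_subseq'
      (x := fun k => ‖x k‖⁻¹ • x k) (by
        refine Eventually.frequently ?_
        filter_upwards [htop.eventually_gt_atTop 0] with k hk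
        simp [norm_smul, hk.ne'])
    refine ⟨φ, hφ, Or.inr ⟨htop.comp hφ.tendsto_atTop, a, ?_, hlim⟩⟩
    rintro rfl
    simp at ha

theorem tendsto_clm_apply {E F ι : Type*} [NormedAddCommGroup E] [NormedSpace ℝ E]
    [NormedAddCommGroup F] [NormedSpace ℝ F] {l : Filter ι} {T : ι → E →L[ℝ] F} {T₀ : E →L[ℝ] F}
    {x : ι → E} {x₀ : E} (hT : Tendsto T l (𝓝 T₀)) (hx : Tendsto x l (𝓝 x₀)) :
    Tendsto (fun k => T k (x k)) l (𝓝 (T₀ x₀)) :=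
  ((isBoundedBilinearMap_apply (𝕜 := ℝ) (E := E) (F := F)).continuous.tendsto (T₀, x₀)).comp
    (hT.prodMk_nhds hx)

theorem tendsto_norm_clm_apply_atTop {X F ι : Type*} [NormedAddCommGroup X] [NormedSpace ℝ X]
    [NormedAddCommGroup F] [NormedSpace ℝ F] {l : Filter ι} (L : X →L[ℝ] F) {x : ι → X} {a : X}
    (hx : Tendsto (fun k => ‖x k‖) l atTop) (hlim : Tendsto (fun k => ‖x k‖⁻¹ • x k) l (𝓝 a))
    (ha : L a ≠ 0) : Tendsto (fun k => ‖L (x k)‖) l atTop := by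
  refine (hx.atTop_mul_pos (norm_pos_iff.mpr ha)
    ((L.continuous.tendsto a).comp hlim).norm).congr' ?_
  filter_upwards [hx.eventually_gt_atTop 0] with k hk
  rw [Function.comp_apply, map_smul, norm_smul, norm_inv, norm_norm, mul_inv_cancel_left₀ hk.ne']

theorem tendsto_norm_apply_atTop {E F ι : Type*} [NormedAddCommGroup E] [NormedSpace ℝ E]
    [NormedAddCommGroup F] [NormedSpace ℝ F] {l : Filter ι} {T : ι → E →L[ℝ] F} {T₀ : E →L[ℝ] F}
    (hT : Tendsto (fun k => ‖T k‖) l atTop) (hlim : Tendsto (fun k => ‖T k‖⁻¹ • T k) l (𝓝 T₀))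
    {x : E} (hx : T₀ x ≠ 0) : Tendsto (fun k => ‖T k x‖) l atTop :=
  tendsto_norm_clm_apply_atTop (ContinuousLinearMap.apply ℝ F x) hT hlim hx

theorem integrable_mul_of_hasCompactSupport {X : Type*} [TopologicalSpace X] [T2Space X]
    [MeasurableSpace X] [OpensMeasurableSpace X] {μ : Measure X} {f φ : X → ℂ}
    (hf : LocallyIntegrable f μ) (hφ : Continuous φ) (hφc : HasCompactSupport φ) :
    Integrable (fun x => f x * φ x) μ :=
  (hf.integrable_smul_left_of_hasCompactSupport hφ hφc).congr
    (Eventually.of_forall fun _ => mul_comm _ _)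

section Distributional

variable {E ι ι' : Type*} [NormedAddCommGroup E] [NormedSpace ℝ E] [MeasurableSpace E]
  {μ : Measure E} {l : Filter ι} {g : ι → E → ℂ} {f h : E → ℂ} {U : Set E}

/-- Convergence of the functions `g k` to `f` in the sense of distributions, that is, tested
against all smooth compactly supported functions. -/
def TendstoDistrib (g : ι → E → ℂ) (l : Filter ι) (f : E → ℂ) (μ : Measure E) : Prop :=
  ∀ φ : E → ℂ, ContDiff ℝ (⊤ : ℕ∞) φ → HasCompactSupport φ →
    Tendsto (fun k => ∫ x, g k x * φ x ∂μ) l (𝓝 (∫ x, f x * φ x ∂μ))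

theorem TendstoDistrib.comp {l' : Filter ι'} {u : ι' → ι} (hg : TendstoDistrib g l f μ)
    (hu : Tendsto u l' l) : TendstoDistrib (fun k => g (u k)) l' f μ :=
  fun φ hφ hφc => (hg φ hφ hφc).comp hu

variable [BorelSpace E] [FiniteDimensional ℝ E]

theorem tendsto_integral_mul_of_tendsto_eLpNorm [IsLocallyFiniteMeasure μ] {r : ℝ≥0∞}
    (hr : 1 ≤ r) (hg : ∀ k, LocallyIntegrable (g k) μ) (hh : LocallyIntegrable h μ)
    {φ : E → ℂ} (hφ : Continuous φ) (hφc : HasCompactSupport φ)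
    (hgh : Tendsto (fun k => eLpNorm (g k - h) r (μ.restrict (tsupport φ))) l (𝓝 0)) :
    Tendsto (fun k => ∫ x, g k x * φ x ∂μ) l (𝓝 (∫ x, h x * φ x ∂μ)) := by
  have : r.HolderConjugate r.conjExponent := .conjExponent hr
  have hφ_mem : MemLp φ r.conjExponent (μ.restrict (tsupport φ)) :=
    (hφ.memLp_of_hasCompactSupport hφc).restrict _
  have hholder : ∀ k, eLpNorm ((fun x => g k x * φ x) - fun x => h x * φ x) 1 μ ≤
      eLpNorm φ r.conjExponent (μ.restrict (tsupport φ)) *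
        eLpNorm (g k - h) r (μ.restrict (tsupport φ)) := fun k => by
    have hprod : (fun x => g k x * φ x) - (fun x => h x * φ x) = φ • (g k - h) := by
      funext x
      simp only [Pi.sub_apply, Pi.smul_apply', smul_eq_mul]
      ring
    have hsupp : (φ • (g k - h)).support ⊆ tsupport φ :=
      (Function.support_smul_subset_left _ _).trans (subset_tsupport φ)
    rw [hprod, ← eLpNorm_restrict_eq_of_support_subset hsupp]
    exact eLpNorm_smul_le_mul_eLpNorm
      (((hg k).aestronglyMeasurable.sub hh.aestronglyMeasurable).restrict)
      hφ_mem.aestronglyMeasurable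
  refine tendsto_integral_of_L1' _
    (integrable_mul_of_hasCompactSupport hh hφ hφc).aestronglyMeasurable
    (Eventually.of_forall fun k => integrable_mul_of_hasCompactSupport (hg k) hφ hφc) ?_
  refine tendsto_of_tendsto_of_tendsto_of_le_of_le tendsto_const_nhds ?_ (fun _ => zero_le) hholder
  simpa using ENNReal.Tendsto.const_mul hgh (Or.inr hφ_mem.eLpNorm_ne_top)

theorem TendstoDistrib.ae_eq_on [l.NeBot] (hg : TendstoDistrib g l f μ) (hf : LocallyIntegrable f μ)
    (hh : LocallyIntegrable h μ) (hU : IsOpen U)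
    (hgh : ∀ φ : E → ℂ, Continuous φ → HasCompactSupport φ → tsupport φ ⊆ U →
      Tendsto (fun k => ∫ x, g k x * φ x ∂μ) l (𝓝 (∫ x, h x * φ x ∂μ))) :
    ∀ᵐ x ∂μ, x ∈ U → f x = h x := by
  have key := hU.ae_eq_zero_of_integral_contDiff_smul_eq_zero
    ((hf.sub hh).locallyIntegrableOn U) fun φ hφ hφc hφU => ?_
  · exact key.mono fun x hx hxU => sub_eq_zero.mp (hx hxU)
  · let ψ : E → ℂ := fun x => (φ x : ℂ)
    have hψ : ContDiff ℝ (⊤ : ℕ∞) ψ := Complex.ofRealCLM.contDiff.comp hφ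
    have hψc : HasCompactSupport ψ := hφc.comp_left Complex.ofReal_zero
    have hψU : tsupport ψ ⊆ U :=
      (closure_mono (Function.support_comp_subset Complex.ofReal_zero φ)).trans hφU
    have heq := tendsto_nhds_unique (hg ψ hψ hψc) (hgh ψ hψ.continuous hψc hψU)
    rw [← sub_eq_zero, ← integral_sub (integrable_mul_of_hasCompactSupport hf hψ.continuous hψc)
      (integrable_mul_of_hasCompactSupport hh hψ.continuous hψc)] at heq
    rw [← heq]
    refine integral_congr_ae (Eventually.of_forall fun x => ?_)
    simp only [ψ, Pi.sub_apply, real_smul]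
    ring

theorem TendstoDistrib.ae_eq_on_of_tendsto_eLpNorm [IsLocallyFiniteMeasure μ] [l.NeBot]
    (hg : TendstoDistrib g l f μ)
    (hf : LocallyIntegrable f μ) (hg_loc : ∀ k, LocallyIntegrable (g k) μ)
    (hh : LocallyIntegrable h μ) (hU : IsOpen U) {r : ℝ≥0∞} (hr : 1 ≤ r)
    (hgh : ∀ K ⊆ U, IsCompact K →
      Tendsto (fun k => eLpNorm (g k - h) r (μ.restrict K)) l (𝓝 0)) :
    ∀ᵐ x ∂μ, x ∈ U → f x = h x :=
  hg.ae_eq_on hf hh hU fun _ hφ hφc hφU =>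
    tendsto_integral_mul_of_tendsto_eLpNorm hr hg_loc hh hφ hφc (hgh _ hφU hφc)

end Distributional

section OscillatoryIntegrals

theorem tendsto_integral_mul_zero_of_dominated {α : Type*} [MeasurableSpace α] {μ : Measure α}
    {F u : ℕ → α → ℂ} {f : α → ℂ} {bound : α → ℝ} (hF : ∀ k, AEStronglyMeasurable (F k) μ)
    (hbound : Integrable bound μ) (hF_le : ∀ k, ∀ᵐ x ∂μ, ‖F k x‖ ≤ bound x)
    (hlim : ∀ᵐ x ∂μ, Tendsto (fun k => F k x) atTop (𝓝 (f x)))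
    (hu : ∀ k, AEStronglyMeasurable (u k) μ) (hu_le : ∀ k x, ‖u k x‖ ≤ 1)
    (hfu : Tendsto (fun k => ∫ x, f x * u k x ∂μ) atTop (𝓝 0)) :
    Tendsto (fun k => ∫ x, F k x * u k x ∂μ) atTop (𝓝 0) := by
  have hf_meas : AEStronglyMeasurable f μ := aestronglyMeasurable_of_tendsto_ae atTop hF hlim
  have hf_le : ∀ᵐ x ∂μ, ‖f x‖ ≤ bound x := by
    filter_upwards [ae_all_iff.mpr hF_le, hlim] with x hx hx_lim
    exact le_of_tendsto' hx_lim.norm hx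
  have hfu_int : ∀ k, Integrable (fun x => f x * u k x) μ := fun k =>
    (hbound.mono' hf_meas hf_le).mul_bdd (hu k) (Eventually.of_forall (hu_le k))
  have hFu_int : ∀ k, Integrable (fun x => F k x * u k x) μ := fun k =>
    (hbound.mono' (hF k) (hF_le k)).mul_bdd (hu k) (Eventually.of_forall (hu_le k))
  have hdiff : Tendsto (fun k => ∫ x, (F k x * u k x - f x * u k x) ∂μ) atTop (𝓝 0) := by
    rw [← integral_zero α ℂ (μ := μ)]
    refine tendsto_integral_of_dominated_convergence (fun x => 2 * bound x)
      (fun k => ((hFu_int k).sub (hfu_int k)).aestronglyMeasurable) (hbound.const_mul 2)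
      (fun k => ?_) ?_
    · filter_upwards [hF_le k, hf_le] with x hFx hfx
      rw [← sub_mul, norm_mul]
      refine (mul_le_of_le_one_right (norm_nonneg _) (hu_le k x)).trans ?_
      linarith [norm_sub_le (F k x) (f x)]
    · filter_upwards [hlim] with x hx
      refine squeeze_zero_norm (fun k => ?_)
        (tendsto_zero_iff_norm_tendsto_zero.mp (tendsto_sub_nhds_zero_iff.mpr hx))
      rw [← sub_mul, norm_mul]
      exact mul_le_of_le_one_right (norm_nonneg _) (hu_le k x)
  refine (add_zero (0 : ℂ) ▸ hdiff.add hfu).congr fun k => ?_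
  rw [integral_sub (hFu_int k) (hfu_int k), sub_add_cancel]

/-- The quadratic phase functions `x ↦ β x x + ℓ x` on `E`, encoded as pairs `(β, ℓ)` of a
bilinear form and a linear form. -/
abbrev QuadPhase (E : Type*) [NormedAddCommGroup E] [NormedSpace ℝ E] :=
  (E →L[ℝ] E →L[ℝ] ℝ) × (E →L[ℝ] ℝ)

variable {E : Type*} [NormedAddCommGroup E] [NormedSpace ℝ E]

/-- The bilinear part of a quadratic phase is symmetric. Only symmetric phases are determined by
the function `x ↦ β x x + ℓ x` they represent. -/
def QuadPhase.IsSymm (θ : QuadPhase E) : Prop :=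
  ∀ x y, θ.1 x y = θ.1 y x

theorem QuadPhase.IsSymm.of_tendsto {ι : Type*} {l : Filter ι} [l.NeBot] {θ : ι → QuadPhase E}
    {θ₀ : QuadPhase E} (hθ : ∀ k, (θ k).IsSymm) (hlim : Tendsto θ l (𝓝 θ₀)) : θ₀.IsSymm := by
  intro x y
  have hβ (x y : E) : Tendsto (fun k => (θ k).1 x y) l (𝓝 (θ₀.1 x y)) :=
    tendsto_clm_apply (tendsto_clm_apply hlim.fst_nhds tendsto_const_nhds) tendsto_const_nhds
  exact tendsto_nhds_unique (hβ x y) ((hβ y x).congr fun k => (hθ k y x))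

/-- The unimodular function `x ↦ exp (i (β x x + ℓ x))` with quadratic phase `θ = (β, ℓ)`. -/
noncomputable def chirp (θ : QuadPhase E) (x : E) : ℂ :=
  exp (I * ((θ.1 x x + θ.2 x : ℝ) : ℂ))

theorem norm_chirp (θ : QuadPhase E) (x : E) : ‖chirp θ x‖ = 1 := by
  rw [chirp, mul_comm, norm_exp_ofReal_mul_I]

theorem tendsto_chirp {ι : Type*} {l : Filter ι} {θ : ι → QuadPhase E} {θ₀ : QuadPhase E}
    {x : ι → E} {x₀ : E} (hθ : Tendsto θ l (𝓝 θ₀)) (hx : Tendsto x l (𝓝 x₀)) :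
    Tendsto (fun k => chirp (θ k) (x k)) l (𝓝 (chirp θ₀ x₀)) := by
  have hphase := (tendsto_clm_apply (tendsto_clm_apply hθ.fst_nhds hx) hx).add
    (tendsto_clm_apply hθ.snd_nhds hx)
  exact (continuous_exp.tendsto _).comp
    (((continuous_ofReal.tendsto _).comp hphase).const_mul I)

theorem continuous_chirp (θ : QuadPhase E) : Continuous (chirp θ) :=
  continuous_iff_continuousAt.mpr fun _ => tendsto_chirp tendsto_const_nhds tendsto_id

theorem chirp_eq_mul_chirp_linear (θ : QuadPhase E) (x : E) :
    chirp θ x = chirp (θ.1, 0) x * chirp (0, θ.2) x := by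
  simp only [chirp, ← exp_add]
  simp [mul_add]

theorem QuadPhase.IsSymm.chirp_add_mul_conj {θ : QuadPhase E} (hθ : θ.IsSymm) (z h : E) :
    chirp θ (z + h) * starRingEnd ℂ (chirp θ z) =
      chirp θ h * chirp (0, (2 : ℝ) • θ.1 h) z := by
  simp only [chirp, ← exp_conj, ← exp_add]
  congr 1
  simp only [map_mul, conj_I, conj_ofReal, map_add, _root_.add_apply, hθ z h,
    _root_.smul_apply, smul_eq_mul, _root_.zero_apply]
  push_cast
  ring

variable [MeasurableSpace E] [BorelSpace E] {μ : Measure E} {f : E → ℂ}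

theorem integrable_mul_chirp (hf : Integrable f μ) (θ : QuadPhase E) :
    Integrable (fun x => f x * chirp θ x) μ :=
  hf.mul_bdd (c := 1) (continuous_chirp θ).aestronglyMeasurable
    (Eventually.of_forall fun x => (norm_chirp θ x).le)

variable [FiniteDimensional ℝ E] [μ.IsAddHaarMeasure]

theorem tendsto_integral_mul_chirp_linear (f : E → ℂ) {ℓ : ℕ → E →L[ℝ] ℝ}
    (hℓ : Tendsto (fun k => ‖ℓ k‖) atTop atTop) :
    Tendsto (fun k => ∫ x, f x * chirp (0, ℓ k) x ∂μ) atTop (𝓝 0) := by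
  have : ProperSpace (E →L[ℝ] ℝ) := FiniteDimensional.proper ℝ _
  have hcocompact : Tendsto (fun k => (-(2 * Real.pi)⁻¹) • ℓ k) atTop
      (cocompact (StrongDual ℝ E)) := by
    rw [← Metric.cobounded_eq_cocompact, ← tendsto_norm_atTop_iff_cobounded]
    simp_rw [norm_smul]
    exact hℓ.const_mul_atTop (norm_pos_iff.mpr (neg_ne_zero.mpr (by positivity)))
  refine ((tendsto_integral_exp_smul_cocompact f μ).comp hcocompact).congr fun k => ?_
  refine integral_congr_ae (Eventually.of_forall fun x => ?_)
  simp only [Circle.smul_def, Real.fourierChar_apply, smul_eq_mul, _root_.smul_apply, chirp,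
    _root_.zero_apply, zero_add]
  rw [mul_comm]
  congr 2
  have hπ : (Real.pi : ℂ) ≠ 0 := ofReal_ne_zero.mpr Real.pi_ne_zero
  push_cast
  field_simp

theorem integrable_translate_mul_conj (hf : Integrable f μ) :
    Integrable (fun p : E × E => f (p.1 + p.2) * starRingEnd ℂ (f p.1)) (μ.prod μ) := by
  have hconj : Integrable (fun x => starRingEnd ℂ (f x)) μ :=
    Complex.conjCLE.toContinuousLinearMap.integrable_comp hf
  have hprod : Integrable (fun p : E × E => f p.2 * starRingEnd ℂ (f p.1)) (μ.prod μ) :=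
    (hconj.mul_prod hf).congr (Eventually.of_forall fun p => mul_comm _ _)
  exact (measurePreserving_prod_add μ μ).integrable_comp_of_integrable hprod

theorem integral_mul_conj_integral (hf : Integrable f μ) :
    (∫ x, f x ∂μ) * starRingEnd ℂ (∫ x, f x ∂μ) =
      ∫ h, ∫ z, f (z + h) * starRingEnd ℂ (f z) ∂μ ∂μ := by
  rw [integral_integral_swap (f := fun h z => f (z + h) * starRingEnd ℂ (f z))
    (integrable_translate_mul_conj hf).swap]
  simp only [integral_mul_const, integral_add_left_eq_self f, integral_const_mul, integral_conj]

/-- Weyl differencing: correlating `f * chirp θ` with its translate by `h` leaves only the linear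
phase `2 β h`. -/
theorem norm_integral_mul_chirp_sq_le (hf : Integrable f μ) {θ : QuadPhase E} (hθ : θ.IsSymm) :
    ‖∫ x, f x * chirp θ x ∂μ‖ ^ 2 ≤
      ∫ h, ‖∫ z, f (z + h) * starRingEnd ℂ (f z) * chirp (0, (2 : ℝ) • θ.1 h) z ∂μ‖ ∂μ := by
  have hcorr : ∀ h z, f (z + h) * chirp θ (z + h) * starRingEnd ℂ (f z * chirp θ z) =
      chirp θ h * (f (z + h) * starRingEnd ℂ (f z) * chirp (0, (2 : ℝ) • θ.1 h) z) := fun h z => by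
    rw [map_mul, mul_mul_mul_comm, hθ.chirp_add_mul_conj]
    ring
  calc ‖∫ x, f x * chirp θ x ∂μ‖ ^ 2
      = ‖(∫ x, f x * chirp θ x ∂μ) * starRingEnd ℂ (∫ x, f x * chirp θ x ∂μ)‖ := by
        rw [norm_mul, RCLike.norm_conj, sq]
    _ = ‖∫ h, ∫ z, f (z + h) * chirp θ (z + h) *
          starRingEnd ℂ (f z * chirp θ z) ∂μ ∂μ‖ := by
        rw [integral_mul_conj_integral (integrable_mul_chirp hf θ)]
    _ ≤ ∫ h, ‖∫ z, f (z + h) * chirp θ (z + h) *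
          starRingEnd ℂ (f z * chirp θ z) ∂μ‖ ∂μ := norm_integral_le_integral_norm _
    _ = _ := by simp only [hcorr, integral_const_mul, norm_mul, norm_chirp, one_mul]

theorem ae_apply_ne_zero {F : Type*} [NormedAddCommGroup F] [NormedSpace ℝ F] {T : E →L[ℝ] F}
    (hT : T ≠ 0) : ∀ᵐ x ∂μ, T x ≠ 0 := by
  have hker : LinearMap.ker T.toLinearMap ≠ ⊤ := fun htop =>
    hT (ContinuousLinearMap.coe_injective (LinearMap.ker_eq_top.mp htop))
  refine (measure_eq_zero_iff_ae_notMem.mp (Measure.addHaar_submodule μ _ hker)).mono ?_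
  exact fun x hx => hx

theorem tendsto_integral_mul_chirp_of_normalized (hf : Integrable f μ) {θ : ℕ → QuadPhase E}
    (hsymm : ∀ k, (θ k).IsSymm) (hθ : Tendsto (fun k => ‖(θ k).1‖) atTop atTop)
    {b : E →L[ℝ] E →L[ℝ] ℝ} (hb : b ≠ 0)
    (hθb : Tendsto (fun k => ‖(θ k).1‖⁻¹ • (θ k).1) atTop (𝓝 b)) :
    Tendsto (fun k => ∫ x, f x * chirp (θ k) x ∂μ) atTop (𝓝 0) := by
  have hcorr : Tendsto (fun k => ∫ h, ‖∫ z, f (z + h) * starRingEnd ℂ (f z) *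
      chirp (0, (2 : ℝ) • (θ k).1 h) z ∂μ‖ ∂μ) atTop (𝓝 0) := by
    rw [← integral_zero E ℝ (μ := μ)]
    refine tendsto_integral_of_dominated_convergence
      (fun h => ∫ z, ‖f (z + h) * starRingEnd ℂ (f z)‖ ∂μ) (fun k => ?_)
      (integrable_translate_mul_conj hf).norm.integral_prod_right
      (fun k => Eventually.of_forall fun h => ?_) ?_
    · have hchirp : Continuous fun p : E × E => chirp (0, (2 : ℝ) • (θ k).1 p.2) p.1 :=
        continuous_iff_continuousAt.mpr fun p => tendsto_chirp (tendsto_const_nhds.prodMk_nhds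
          ((((θ k).1.continuous.tendsto _).comp continuous_snd.continuousAt).const_smul 2))
          continuous_fst.continuousAt
      exact ((integrable_translate_mul_conj hf).mul_bdd (c := 1) hchirp.aestronglyMeasurable
        (Eventually.of_forall fun p => (norm_chirp _ _).le)).integral_prod_right.norm.1
    · rw [norm_norm]
      refine (norm_integral_le_integral_norm _).trans_eq ?_
      simp only [norm_mul, norm_chirp, mul_one]
    · filter_upwards [ae_apply_ne_zero (μ := μ) hb] with h hbh
      refine tendsto_zero_iff_norm_tendsto_zero.mp
        (tendsto_integral_mul_chirp_linear (fun z => f (z + h) * starRingEnd ℂ (f z)) ?_)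
      simp only [norm_smul, Real.norm_ofNat]
      exact (tendsto_norm_apply_atTop hθ hθb hbh).const_mul_atTop two_pos
  rw [tendsto_zero_iff_norm_tendsto_zero]
  refine squeeze_zero (fun _ => norm_nonneg _) (fun k => Real.le_sqrt_of_sq_le
    (norm_integral_mul_chirp_sq_le hf (hsymm k))) ?_
  simpa using hcorr.sqrt

theorem tendsto_integral_mul_chirp (hf : Integrable f μ) {θ : ℕ → QuadPhase E}
    (hsymm : ∀ k, (θ k).IsSymm) (hθ : Tendsto (fun k => ‖θ k‖) atTop atTop) :
    Tendsto (fun k => ∫ x, f x * chirp (θ k) x ∂μ) atTop (𝓝 0) := by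
  have : ProperSpace (E →L[ℝ] E →L[ℝ] ℝ) := FiniteDimensional.proper ℝ (E →L[ℝ] E →L[ℝ] ℝ)
  refine tendsto_of_subseq_tendsto fun u hu => ?_
  obtain ⟨φ, hφ, ⟨b, hb⟩ | ⟨hnorm, b, hb0, hb⟩⟩ :=
    exists_subseq_tendsto_or_normalized fun k => (θ (u k)).1
  · refine ⟨φ, ?_⟩
    have hlinear : Tendsto (fun k => ‖(θ (u (φ k))).2‖) atTop atTop := by
      refine tendsto_atTop.mpr fun C => ?_
      have hb_norm : Tendsto (fun k => ‖(θ (u (φ k))).1‖) atTop (𝓝 ‖b‖) :=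
        (continuous_norm.tendsto b).comp hb
      filter_upwards [hb_norm.eventually_lt_const (lt_add_one ‖b‖),
        (hθ.comp (hu.comp hφ.tendsto_atTop)).eventually_ge_atTop (max (‖b‖ + 1) C)] with k hβ hθk
      have hβ_lt : ‖(θ (u (φ k))).1‖ < max (‖b‖ + 1) C := hβ.trans_le (le_max_left _ _)
      exact (le_max_right _ _).trans ((le_max_iff.mp hθk).resolve_left hβ_lt.not_ge)
    simp only [chirp_eq_mul_chirp_linear (θ _), ← mul_assoc]
    refine tendsto_integral_mul_zero_of_dominated (f := fun x => f x * chirp (b, 0) x)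
      (fun k => (integrable_mul_chirp hf _).aestronglyMeasurable) hf.norm
      (fun k => Eventually.of_forall fun x => ?_) (Eventually.of_forall fun x => ?_)
      (fun k => (continuous_chirp _).aestronglyMeasurable) (fun k x => (norm_chirp _ x).le)
      (tendsto_integral_mul_chirp_linear _ hlinear)
    · rw [norm_mul, norm_chirp, mul_one]
    · exact (tendsto_chirp (hb.prodMk_nhds tendsto_const_nhds) tendsto_const_nhds).const_mul _
  · exact ⟨φ, tendsto_integral_mul_chirp_of_normalized hf (fun k => hsymm _) hnorm hb0 hb⟩

end OscillatoryIntegrals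

theorem exists_memLp_inv_one_add_norm_pow {E : Type*} [NormedAddCommGroup E]
    [MeasurableSpace E] [BorelSpace E] (μ : Measure E) [μ.HasTemperateGrowth] (r : ℝ≥0∞) :
    ∃ m : ℕ, MemLp (fun y : E => ((1 + ‖y‖) ^ m)⁻¹) r μ := by
  obtain ⟨m, hm⟩ := Measure.HasTemperateGrowth.exists_eLpNorm_lt_top r ‹μ.HasTemperateGrowth›
  have hcont : Continuous fun y : E => ((1 + ‖y‖) ^ m)⁻¹ :=
    Continuous.inv₀ (by fun_prop) fun y => by positivity
  refine ⟨m, hcont.measurable.aestronglyMeasurable, ?_⟩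
  simpa only [Real.rpow_neg_natCast, zpow_neg, zpow_natCast] using hm

section SchwartzFamilies

variable {E V : Type*} [NormedAddCommGroup E] [NormedSpace ℝ E] [NormedAddCommGroup V]
  [NormedSpace ℂ V] (Φ : V →L[ℂ] 𝓢(E, ℂ))

theorem exists_norm_apply_le_inv_one_add_norm_pow (m : ℕ) :
    ∃ C : ℝ, 0 ≤ C ∧ ∀ v y, ‖Φ v y‖ ≤ C * ‖v‖ * ((1 + ‖y‖) ^ m)⁻¹ := by
  let p : Seminorm ℂ 𝓢(E, ℂ) := (Finset.Iic (m, 0)).sup fun n => SchwartzMap.seminorm ℂ n.1 n.2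
  have hp : Continuous p :=
    (schwartz_withSeminorms ℂ E ℂ).partial_sups.continuous_seminorm (m, 0)
  obtain ⟨C, hC, hle⟩ := Seminorm.bound_of_continuous_normedSpace
    (p.comp Φ.toLinearMap) (hp.comp Φ.continuous)
  refine ⟨2 ^ m * C, by positivity, fun v y => ?_⟩
  rw [le_mul_inv_iff₀ (by positivity), mul_comm ‖_‖]
  calc (1 + ‖y‖) ^ m * ‖Φ v y‖
      ≤ 2 ^ m * p (Φ v) := by
        simpa using SchwartzMap.one_add_le_sup_seminorm_apply (𝕜 := ℂ) (m := (m, 0)) le_rfl le_rfl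
          (Φ v) y
    _ ≤ 2 ^ m * (C * ‖v‖) := by gcongr; exact hle v
    _ = 2 ^ m * C * ‖v‖ := by ring

theorem tendsto_schwartz_apply {ι : Type*} {l : Filter ι} {v : ι → V} {v₀ : V} {y : ι → E} {y₀ : E}
    (hv : Tendsto v l (𝓝 v₀)) (hy : Tendsto y l (𝓝 y₀)) :
    Tendsto (fun k => Φ (v k) (y k)) l (𝓝 (Φ v₀ y₀)) :=
  (((SchwartzMap.toBoundedContinuousFunctionCLM ℂ E ℂ).continuous.comp Φ.continuous).tendsto v₀
    |>.comp hv).eval hy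

variable [MeasurableSpace E] [BorelSpace E] (μ : Measure E)

theorem exists_norm_le_mul_eLpNorm [SecondCountableTopology E] [FiniteDimensional ℂ V]
    [μ.HasTemperateGrowth] [μ.IsOpenPosMeasure] (hΦ : Function.Injective Φ) {r : ℝ≥0∞}
    (hr : 1 ≤ r) : ∃ K : ℝ, 0 ≤ K ∧ ∀ v, ‖v‖ ≤ K * (eLpNorm (Φ v) r μ).toReal := by
  have : Fact (1 ≤ r) := ⟨hr⟩
  let T : V →L[ℂ] Lp ℂ r μ := (SchwartzMap.toLpCLM ℂ ℂ r μ).comp Φ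
  have hT : T.toLinearMap.ker = ⊥ :=
    LinearMap.ker_eq_bot.mpr ((SchwartzMap.injective_toLp r μ).comp hΦ)
  obtain ⟨K, -, hK⟩ := T.toLinearMap.exists_antilipschitzWith hT
  refine ⟨K, K.2, fun v => (hK.le_mul_norm (map_zero T) v).trans_eq ?_⟩
  exact congrArg _ SchwartzMap.norm_toLp

end SchwartzFamilies

section AffineChangeOfVariables

theorem isUnit_iff_det_ne_zero {𝕜 E : Type*} [NontriviallyNormedField 𝕜] [CompleteSpace 𝕜]
    [NormedAddCommGroup E] [NormedSpace 𝕜 E] [FiniteDimensional 𝕜 E] {T : E →L[𝕜] E} :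
    IsUnit T ↔ T.det ≠ 0 := by
  have : CompleteSpace E := FiniteDimensional.complete 𝕜 E
  rw [ContinuousLinearMap.isUnit_iff_bijective, ← isUnit_iff_ne_zero, ContinuousLinearMap.det,
    ← LinearMap.isUnit_iff_isUnit_det, Module.End.isUnit_iff, ContinuousLinearMap.coe_coe]

variable {E : Type*} [NormedAddCommGroup E] [NormedSpace ℝ E] [FiniteDimensional ℝ E]
  [MeasurableSpace E] [BorelSpace E] {μ : Measure E} [μ.IsAddHaarMeasure]

theorem eLpNorm_restrict_eq_comp_affine {F : Type*} [NormedAddCommGroup F] (M : (E →L[ℝ] E)ˣ)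
    (q : E) {r : ℝ≥0∞} (hr_top : r ≠ ∞) (f : E → F) (K : Set E) :
    eLpNorm f r (μ.restrict K) =
      ENNReal.ofReal (|M.val.det| ^ (1 / r).toReal) *
        eLpNorm (fun y => f (M.val y + q)) r (μ.restrict {y | M.val y + q ∈ K}) := by
  have hdet : M.val.det ≠ 0 := isUnit_iff_det_ne_zero.mp M.isUnit
  have hemb : MeasurableEmbedding fun y => M.val y + q :=
    (measurableEmbedding_addRight q).comp
      (ContinuousLinearEquiv.ofUnit M).toHomeomorph.measurableEmbedding
  have hmap : μ.map (fun y => M.val y + q) = ENNReal.ofReal |M.val.det⁻¹| • μ :=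
    calc μ.map (fun y => M.val y + q)
        = (μ.map M.val.toLinearMap).map (· + q) :=
          (Measure.map_map (measurable_add_const q) M.val.continuous.measurable).symm
      _ = ENNReal.ofReal |M.val.det⁻¹| • μ := by
          rw [Measure.map_linearMap_addHaar_eq_smul_addHaar μ hdet, Measure.map_smul,
            map_add_right_eq_self]
  have hμ : μ = ENNReal.ofReal |M.val.det| • μ.map (fun y => M.val y + q) := by
    rw [hmap, smul_smul, ← ENNReal.ofReal_mul (abs_nonneg _), ← abs_mul, mul_inv_cancel₀ hdet]
    simp
  conv_lhs => rw [hμ]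
  rw [Measure.restrict_smul, hemb.restrict_map, eLpNorm_smul_measure_of_ne_top hr_top,
    hemb.eLpNorm_map_measure, ENNReal.ofReal_rpow_of_nonneg (abs_nonneg _) ENNReal.toReal_nonneg]
  rfl

end AffineChangeOfVariables

section WavePackets

variable {E V : Type*} [NormedAddCommGroup E] [NormedSpace ℝ E] [NormedAddCommGroup V]
  [NormedSpace ℂ V]

/-- The wave packet with shape `Φ v`, dilated by `M`, centred at `q` and modulated by the quadratic
phase `θ`. The shapes range over a linear family `Φ` of Schwartz functions, such as the products of
the standard Gaussian with polynomials of bounded degree. -/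
noncomputable def wavePacket (Φ : V →L[ℂ] 𝓢(E, ℂ)) (v : V) (M : (E →L[ℝ] E)ˣ) (q : E)
    (θ : QuadPhase E) (x : E) : ℂ :=
  Φ v (M⁻¹.val (x - q)) * chirp θ x

/-- The multiple of `v` for which the shape `Φ v` has the same `L^r` norm as the wave packets of
amplitude `v` and dilation `M`. -/
noncomputable def lpAmplitude (r : ℝ≥0∞) (M : (E →L[ℝ] E)ˣ) (v : V) : V :=
  ((|M.val.det| ^ (1 / r).toReal : ℝ) : ℂ) • v

variable (Φ : V →L[ℂ] 𝓢(E, ℂ))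

theorem norm_wavePacket (v : V) (M : (E →L[ℝ] E)ˣ) (q : E) (θ : QuadPhase E) (x : E) :
    ‖wavePacket Φ v M q θ x‖ = ‖Φ v (M⁻¹.val (x - q))‖ := by
  rw [wavePacket, norm_mul, norm_chirp, mul_one]

theorem continuous_wavePacket (v : V) (M : (E →L[ℝ] E)ˣ) (q : E) (θ : QuadPhase E) :
    Continuous (wavePacket Φ v M q θ) :=
  ((Φ v).continuous.comp (M⁻¹.val.continuous.comp (continuous_id.sub continuous_const))).mul
    (continuous_chirp θ)

theorem tendsto_schwartz_apply_inv_sub {ι : Type*} {l : Filter ι} {v : ι → V}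
    {v₀ : V} {M : ι → (E →L[ℝ] E)ˣ} {M₀ : (E →L[ℝ] E)ˣ} {q x : ι → E} {q₀ x₀ : E}
    (hv : Tendsto v l (𝓝 v₀)) (hM : Tendsto M l (𝓝 M₀)) (hq : Tendsto q l (𝓝 q₀))
    (hx : Tendsto x l (𝓝 x₀)) :
    Tendsto (fun k => Φ (v k) ((M k)⁻¹.val (x k - q k))) l (𝓝 (Φ v₀ (M₀⁻¹.val (x₀ - q₀)))) :=
  tendsto_schwartz_apply Φ hv (tendsto_clm_apply
    ((Units.continuous_coe_inv.tendsto M₀).comp hM) (hx.sub hq))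

theorem tendsto_wavePacket {ι : Type*} {l : Filter ι} {v : ι → V}
    {v₀ : V} {M : ι → (E →L[ℝ] E)ˣ} {M₀ : (E →L[ℝ] E)ˣ} {q x : ι → E} {q₀ x₀ : E}
    {θ : ι → QuadPhase E} {θ₀ : QuadPhase E}
    (hv : Tendsto v l (𝓝 v₀)) (hM : Tendsto M l (𝓝 M₀)) (hq : Tendsto q l (𝓝 q₀))
    (hθ : Tendsto θ l (𝓝 θ₀)) (hx : Tendsto x l (𝓝 x₀)) :
    Tendsto (fun k => wavePacket Φ (v k) (M k) (q k) (θ k) (x k)) l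
      (𝓝 (wavePacket Φ v₀ M₀ q₀ θ₀ x₀)) :=
  (tendsto_schwartz_apply_inv_sub Φ hv hM hq hx).mul (tendsto_chirp hθ hx)

variable [FiniteDimensional ℝ E] [MeasurableSpace E] [BorelSpace E] {μ : Measure E}
  [μ.IsAddHaarMeasure]

theorem eLpNorm_wavePacket_restrict {r : ℝ≥0∞} (hr_top : r ≠ ∞) (v : V) (M : (E →L[ℝ] E)ˣ) (q : E)
    (θ : QuadPhase E) (K : Set E) :
    eLpNorm (wavePacket Φ v M q θ) r (μ.restrict K) =
      eLpNorm (Φ (lpAmplitude r M v)) r (μ.restrict {y | M.val y + q ∈ K}) := by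
  have hdet : ENNReal.ofReal (|M.val.det| ^ (1 / r).toReal) =
      ‖((|M.val.det| ^ (1 / r).toReal : ℝ) : ℂ)‖ₑ := by
    rw [← ofReal_norm, Complex.norm_real, Real.norm_of_nonneg (by positivity)]
  rw [eLpNorm_restrict_eq_comp_affine M q hr_top, hdet, ← eLpNorm_const_smul]
  refine eLpNorm_congr_norm_ae (Eventually.of_forall fun y => ?_)
  have hMy : M⁻¹.val (M.val y) = y := DFunLike.congr_fun M.inv_mul y
  rw [Pi.smul_apply, norm_smul, norm_wavePacket, add_sub_cancel_right, hMy, lpAmplitude, map_smul,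
    _root_.smul_apply, norm_smul]

theorem exists_norm_lpAmplitude_le [FiniteDimensional ℂ V] (hΦ : Function.Injective Φ) {r : ℝ≥0∞}
    (hr : 1 ≤ r) (hr_top : r ≠ ∞) {C : ℝ≥0∞} (hC : C ≠ ∞) :
    ∃ R : ℝ, ∀ v M q θ, eLpNorm (wavePacket Φ v M q θ) r μ ≤ C → ‖lpAmplitude r M v‖ ≤ R := by
  obtain ⟨K, hK, hle⟩ := exists_norm_le_mul_eLpNorm Φ μ hΦ hr
  refine ⟨K * C.toReal, fun v M q θ hbound => (hle _).trans ?_⟩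
  have hnorm := eLpNorm_wavePacket_restrict Φ (μ := μ) hr_top v M q θ Set.univ
  simp only [Set.mem_univ, Set.ofPred_true, Measure.restrict_univ] at hnorm
  rw [← hnorm]
  gcongr

theorem tendsto_eLpNorm_restrict_of_eventually_notMem {α F : Type*} [MeasurableSpace α]
    [NormedAddCommGroup F] {μ : Measure α} {r : ℝ≥0∞} (hr0 : r ≠ 0) (hr_top : r ≠ ∞) {H : α → F}
    (hH : MemLp H r μ) {A : ℕ → Set α} (hA : ∀ k, MeasurableSet (A k))
    (h : ∀ᵐ y ∂μ, ∀ᶠ k in atTop, y ∉ A k) :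
    Tendsto (fun k => eLpNorm H r (μ.restrict (A k))) atTop (𝓝 0) := by
  have hpos : 0 < r.toReal := ENNReal.toReal_pos hr0 hr_top
  have hlim : Tendsto (fun k => ∫⁻ y, (A k).indicator (fun y => ‖H y‖ₑ ^ r.toReal) y ∂μ) atTop
      (𝓝 (∫⁻ _, 0 ∂μ)) := by
    refine tendsto_lintegral_of_dominated_convergence' (fun y => ‖H y‖ₑ ^ r.toReal)
      (fun k => (hH.1.enorm.pow_const _).indicator (hA k))
      (fun k => Eventually.of_forall fun y => Set.indicator_le_self _ _ y)
      (lintegral_rpow_enorm_lt_top_of_eLpNorm_lt_top hr0 hr_top hH.2).ne ?_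
    filter_upwards [h] with y hy
    refine tendsto_const_nhds.congr' ?_
    filter_upwards [hy] with k hk
    rw [Set.indicator_of_notMem hk]
  have hroot := hlim.ennrpow_const (1 / r.toReal)
  rw [lintegral_zero, ENNReal.zero_rpow_of_pos (by positivity)] at hroot
  refine hroot.congr fun k => ?_
  rw [eLpNorm_eq_lintegral_rpow_enorm_toReal hr0 hr_top, lintegral_indicator (hA k)]

variable {v : ℕ → V} {M : ℕ → (E →L[ℝ] E)ˣ} {q : ℕ → E} {θ : ℕ → QuadPhase E} {f : E → ℂ}
  {r : ℝ≥0∞} {R : ℝ}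

theorem tendsto_eLpNorm_wavePacket_restrict_zero (hr0 : r ≠ 0) (hr_top : r ≠ ∞)
    (hR : ∀ k, ‖lpAmplitude r (M k) (v k)‖ ≤ R) {K : Set E} (hK : MeasurableSet K)
    (hesc : ∀ᵐ y ∂μ, ∀ᶠ k in atTop, (M k).val y + q k ∉ K) :
    Tendsto (fun k => eLpNorm (wavePacket Φ (v k) (M k) (q k) (θ k)) r (μ.restrict K))
      atTop (𝓝 0) := by
  obtain ⟨m, hm⟩ := exists_memLp_inv_one_add_norm_pow μ r
  obtain ⟨C, hC, hle⟩ := exists_norm_apply_le_inv_one_add_norm_pow Φ m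
  have htail := tendsto_eLpNorm_restrict_of_eventually_notMem hr0 hr_top (hm.const_mul (C * R))
    (A := fun k => {y | (M k).val y + q k ∈ K})
    (fun k => ((M k).val.continuous.add continuous_const).measurable hK) hesc
  refine tendsto_of_tendsto_of_tendsto_of_le_of_le tendsto_const_nhds htail (fun _ => zero_le)
    fun k => ?_
  rw [eLpNorm_wavePacket_restrict Φ hr_top]
  refine eLpNorm_mono_real fun y => (hle _ y).trans ?_
  gcongr
  exact hR k

theorem TendstoDistrib.ae_eq_zero_on_of_escape
    (hg : TendstoDistrib (fun k => wavePacket Φ (v k) (M k) (q k) (θ k)) atTop f μ)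
    (hf : LocallyIntegrable f μ) (hr : 1 ≤ r) (hr_top : r ≠ ∞)
    (hR : ∀ k, ‖lpAmplitude r (M k) (v k)‖ ≤ R) {U : Set E} (hU : IsOpen U)
    (hesc : ∀ K ⊆ U, IsCompact K → ∀ᵐ y ∂μ, ∀ᶠ k in atTop, (M k).val y + q k ∉ K) :
    ∀ᵐ x ∂μ, x ∈ U → f x = 0 :=
  hg.ae_eq_on_of_tendsto_eLpNorm (h := 0) hf
    (fun _ => (continuous_wavePacket Φ _ _ _ _).locallyIntegrable) locallyIntegrable_zero hU hr
    fun K hKU hK => by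
      simpa only [sub_zero] using tendsto_eLpNorm_wavePacket_restrict_zero Φ
        (zero_lt_one.trans_le hr).ne' hr_top hR hK.measurableSet (hesc K hKU hK)

end WavePackets

section ParameterCompactness

variable {E V : Type*} [NormedAddCommGroup E] [NormedSpace ℝ E] [FiniteDimensional ℝ E]
  [MeasurableSpace E] [BorelSpace E] {μ : Measure E} [μ.IsAddHaarMeasure]

theorem ae_apply_add_ne_zero {F : Type*} [NormedAddCommGroup F] [NormedSpace ℝ F] {T : E →L[ℝ] F}
    {b : F} (h : (T, b) ≠ 0) : ∀ᵐ y ∂μ, T y + b ≠ 0 := by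
  by_cases hy₀ : ∃ y₀, T y₀ + b = 0
  · obtain ⟨y₀, hy₀⟩ := hy₀
    have hT : T ≠ 0 := by
      rintro rfl
      simp_all
    filter_upwards [(measurePreserving_sub_right μ y₀).quasiMeasurePreserving.ae
      (ae_apply_ne_zero hT)] with y hy
    rwa [eq_neg_of_add_eq_zero_right hy₀, ← sub_eq_add_neg, ← map_sub]
  · exact Eventually.of_forall (not_exists.mp hy₀)

theorem ae_eventually_apply_add_notMem {F : Type*} [NormedAddCommGroup F] [NormedSpace ℝ F]
    {p : ℕ → (E →L[ℝ] F) × F} {p₀ : (E →L[ℝ] F) × F} (hp : Tendsto (fun k => ‖p k‖) atTop atTop)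
    (hp₀ : p₀ ≠ 0) (hlim : Tendsto (fun k => ‖p k‖⁻¹ • p k) atTop (𝓝 p₀)) {K : Set F}
    (hK : IsCompact K) : ∀ᵐ y ∂μ, ∀ᶠ k in atTop, (p k).1 y + (p k).2 ∉ K := by
  filter_upwards [ae_apply_add_ne_zero (T := p₀.1) (b := p₀.2) hp₀] with y hy
  let L : (E →L[ℝ] F) × F →L[ℝ] F := (ContinuousLinearMap.apply ℝ F y).coprod (.id ℝ F)
  have hL : Tendsto (fun k => ‖L (p k)‖) atTop atTop := tendsto_norm_clm_apply_atTop L hp hlim hy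
  obtain ⟨B, hB⟩ := hK.isBounded.exists_norm_le
  filter_upwards [hL.eventually_gt_atTop B] with k hk hmem
  exact (hB _ hmem).not_gt hk

variable [NormedAddCommGroup V] [NormedSpace ℂ V] (Φ : V →L[ℂ] 𝓢(E, ℂ)) {v : ℕ → V}
  {M : ℕ → (E →L[ℝ] E)ˣ} {q : ℕ → E} {θ : ℕ → QuadPhase E} {f : E → ℂ} {r : ℝ≥0∞} {R : ℝ}

theorem TendstoDistrib.isUnit_of_tendsto
    (hg : TendstoDistrib (fun k => wavePacket Φ (v k) (M k) (q k) (θ k)) atTop f μ)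
    (hf : LocallyIntegrable f μ) (hf0 : ¬ f =ᵐ[μ] 0) (hr : 1 ≤ r) (hr_top : r ≠ ∞)
    (hR : ∀ k, ‖lpAmplitude r (M k) (v k)‖ ≤ R) {T : E →L[ℝ] E} {q₀ : E}
    (hM : Tendsto (fun k => (M k).val) atTop (𝓝 T)) (hq : Tendsto q atTop (𝓝 q₀)) : IsUnit T := by
  rw [isUnit_iff_det_ne_zero]
  intro hdet
  have hrange : T.toLinearMap.range ≠ ⊤ := (LinearMap.range_lt_top_of_det_eq_zero hdet).ne
  let H : Set E := (· - q₀) ⁻¹' (T.toLinearMap.range : Set E)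
  have hH_null : ∀ᵐ x ∂μ, x ∉ H :=
    (measurePreserving_sub_right μ q₀).quasiMeasurePreserving.ae
      (measure_eq_zero_iff_ae_notMem.mp (Measure.addHaar_submodule μ _ hrange))
  have hH_closed : IsClosed H :=
    (Submodule.closed_of_finiteDimensional _).preimage (continuous_id.sub continuous_const)
  have hzero := hg.ae_eq_zero_on_of_escape Φ hf hr hr_top hR hH_closed.isOpen_compl
    fun K hKH hK => Eventually.of_forall fun y => by
      have hy : T y + q₀ ∉ K := fun hmem => hKH hmem ⟨y, by simp⟩
      exact ((tendsto_clm_apply hM tendsto_const_nhds).add hq).eventually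
        (hK.isClosed.isOpen_compl.mem_nhds hy)
  exact hf0 (hH_null.mp (hzero.mono fun _ hx hxH => hx hxH))

theorem TendstoDistrib.exists_subseq_affine_tendsto
    (hg : TendstoDistrib (fun k => wavePacket Φ (v k) (M k) (q k) (θ k)) atTop f μ)
    (hf : LocallyIntegrable f μ) (hf0 : ¬ f =ᵐ[μ] 0) (hr : 1 ≤ r) (hr_top : r ≠ ∞)
    (hR : ∀ k, ‖lpAmplitude r (M k) (v k)‖ ≤ R) :
    ∃ (φ : ℕ → ℕ) (M₀ : (E →L[ℝ] E)ˣ) (q₀ : E), StrictMono φ ∧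
      Tendsto (fun k => M (φ k)) atTop (𝓝 M₀) ∧ Tendsto (fun k => q (φ k)) atTop (𝓝 q₀) := by
  have : ProperSpace ((E →L[ℝ] E) × E) := FiniteDimensional.proper ℝ _
  have : CompleteSpace E := FiniteDimensional.complete ℝ E
  obtain ⟨φ, hφ, ⟨⟨T, q₀⟩, hp⟩ | ⟨hnorm, p, hp0, hp⟩⟩ :=
    exists_subseq_tendsto_or_normalized fun k => ((M k).val, q k)
  · obtain ⟨M₀, rfl⟩ := (hg.comp hφ.tendsto_atTop).isUnit_of_tendsto Φ hf hf0 hr hr_top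
      (fun k => hR (φ k)) hp.fst_nhds hp.snd_nhds
    exact ⟨φ, M₀, q₀, hφ, Units.isOpenEmbedding_val.tendsto_nhds_iff.mpr hp.fst_nhds, hp.snd_nhds⟩
  · have hzero := (hg.comp hφ.tendsto_atTop).ae_eq_zero_on_of_escape Φ hf hr hr_top
      (fun k => hR (φ k)) isOpen_univ fun K _ hK => ae_eventually_apply_add_notMem hnorm hp0 hp hK
    exact absurd (hzero.mono fun x hx => hx trivial) hf0

omit [MeasurableSpace E] [BorelSpace E] in
theorem exists_subseq_amplitude_tendsto [FiniteDimensional ℂ V] {M₀ : (E →L[ℝ] E)ˣ}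
    (hM : Tendsto M atTop (𝓝 M₀)) (hR : ∀ k, ‖lpAmplitude r (M k) (v k)‖ ≤ R) :
    ∃ (φ : ℕ → ℕ) (v₀ : V), StrictMono φ ∧ Tendsto (fun k => v (φ k)) atTop (𝓝 v₀) := by
  have : ProperSpace V := FiniteDimensional.proper ℂ V
  have hdet : |M₀.val.det| ≠ 0 := abs_ne_zero.mpr (isUnit_iff_det_ne_zero.mp M₀.isUnit)
  obtain ⟨w, -, φ, hφ, hw⟩ := tendsto_subseq_of_bounded
    (Metric.isBounded_closedBall (x := (0 : V)) (r := R))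
    (x := fun k => lpAmplitude r (M k) (v k)) (by simpa using hR)
  have hscale : Tendsto (fun k => ((|(M (φ k)).val.det| ^ (1 / r).toReal : ℝ) : ℂ)) atTop
      (𝓝 ((|M₀.val.det| ^ (1 / r).toReal : ℝ) : ℂ)) :=
    (continuous_ofReal.tendsto _).comp ((((ContinuousLinearMap.continuous_det.comp
      Units.continuous_val).tendsto M₀).comp (hM.comp hφ.tendsto_atTop)).abs.rpow_const
        (Or.inl hdet))
  have hpos (N : (E →L[ℝ] E)ˣ) : ((|N.val.det| ^ (1 / r).toReal : ℝ) : ℂ) ≠ 0 :=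
    ofReal_ne_zero.mpr (Real.rpow_pos_of_pos
      (abs_pos.mpr (isUnit_iff_det_ne_zero.mp N.isUnit)) _).ne'
  refine ⟨φ, _, hφ, ((hscale.inv₀ (hpos M₀)).smul hw).congr fun k => ?_⟩
  exact inv_smul_smul₀ (hpos _) _

theorem tendsto_integral_wavePacket_mul_zero {v₀ : V} {M₀ : (E →L[ℝ] E)ˣ} {q₀ : E}
    (hv : Tendsto v atTop (𝓝 v₀)) (hM : Tendsto M atTop (𝓝 M₀)) (hq : Tendsto q atTop (𝓝 q₀))
    (hsymm : ∀ k, (θ k).IsSymm) (hθ : Tendsto (fun k => ‖θ k‖) atTop atTop) {φ : E → ℂ}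
    (hφ : Integrable φ μ) :
    Tendsto (fun k => ∫ x, wavePacket Φ (v k) (M k) (q k) (θ k) x * φ x ∂μ) atTop (𝓝 0) := by
  obtain ⟨C, hC, hle⟩ := exists_norm_apply_le_inv_one_add_norm_pow Φ 0
  obtain ⟨B, hB⟩ := (Metric.isBounded_range_of_tendsto v hv).exists_norm_le
  let F (k : ℕ) (x : E) : ℂ := Φ (v k) ((M k)⁻¹.val (x - q k)) * φ x
  have hF_cont (k : ℕ) : Continuous fun x => Φ (v k) ((M k)⁻¹.val (x - q k)) :=
    (Φ (v k)).continuous.comp ((M k)⁻¹.val.continuous.comp (continuous_id.sub continuous_const))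
  have hF_le (k : ℕ) (x : E) : ‖F k x‖ ≤ C * B * ‖φ x‖ := by
    rw [norm_mul]
    gcongr
    refine (hle _ _).trans ?_
    rw [pow_zero, inv_one, mul_one]
    gcongr
    exact hB _ ⟨k, rfl⟩
  have hF_lim (x : E) : Tendsto (fun k => F k x) atTop (𝓝 (Φ v₀ (M₀⁻¹.val (x - q₀)) * φ x)) :=
    (tendsto_schwartz_apply_inv_sub Φ hv hM hq tendsto_const_nhds).mul_const _
  have hF_meas (k : ℕ) : AEStronglyMeasurable (F k) μ :=
    (hF_cont k).aestronglyMeasurable.mul hφ.aestronglyMeasurable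
  have hbound : Integrable (fun x => C * B * ‖φ x‖) μ := hφ.norm.const_mul _
  have hlim_int : Integrable (fun x => Φ v₀ (M₀⁻¹.val (x - q₀)) * φ x) μ :=
    hbound.mono' (aestronglyMeasurable_of_tendsto_ae atTop hF_meas (Eventually.of_forall hF_lim))
      (Eventually.of_forall fun x => le_of_tendsto' (hF_lim x).norm fun k => hF_le k x)
  refine (tendsto_integral_mul_zero_of_dominated hF_meas hbound
    (fun k => Eventually.of_forall (hF_le k)) (Eventually.of_forall hF_lim)
    (fun k => (continuous_chirp (θ k)).aestronglyMeasurable) (fun k x => (norm_chirp _ x).le)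
    (tendsto_integral_mul_chirp hlim_int hsymm hθ)).congr fun k => ?_
  exact integral_congr_ae (Eventually.of_forall fun x => mul_right_comm _ _ _)

theorem TendstoDistrib.exists_subseq_phase_tendsto
    (hg : TendstoDistrib (fun k => wavePacket Φ (v k) (M k) (q k) (θ k)) atTop f μ)
    (hf : LocallyIntegrable f μ) (hf0 : ¬ f =ᵐ[μ] 0) {v₀ : V} {M₀ : (E →L[ℝ] E)ˣ} {q₀ : E}
    (hv : Tendsto v atTop (𝓝 v₀)) (hM : Tendsto M atTop (𝓝 M₀)) (hq : Tendsto q atTop (𝓝 q₀))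
    (hsymm : ∀ k, (θ k).IsSymm) :
    ∃ (φ : ℕ → ℕ) (θ₀ : QuadPhase E), StrictMono φ ∧ θ₀.IsSymm ∧
      Tendsto (fun k => θ (φ k)) atTop (𝓝 θ₀) := by
  have : ProperSpace (QuadPhase E) := FiniteDimensional.proper ℝ (QuadPhase E)
  obtain ⟨φ, hφ, ⟨θ₀, hθ₀⟩ | ⟨hnorm, -⟩⟩ := exists_subseq_tendsto_or_normalized θ
  · exact ⟨φ, θ₀, hφ, .of_tendsto (fun k => hsymm (φ k)) hθ₀, hθ₀⟩
  · have hsub := hφ.tendsto_atTop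
    have hzero := (hg.comp hsub).ae_eq_on hf locallyIntegrable_zero isOpen_univ
      fun ψ hψ hψc _ => by
        simpa using tendsto_integral_wavePacket_mul_zero Φ (hv.comp hsub) (hM.comp hsub)
          (hq.comp hsub) (fun k => hsymm (φ k)) hnorm (hψ.integrable_of_hasCompactSupport hψc)
    exact absurd (hzero.mono fun x hx => hx trivial) hf0

theorem TendstoDistrib.exists_subseq_parameters_tendsto [FiniteDimensional ℂ V]
    (hg : TendstoDistrib (fun k => wavePacket Φ (v k) (M k) (q k) (θ k)) atTop f μ)
    (hf : LocallyIntegrable f μ) (hf0 : ¬ f =ᵐ[μ] 0) (hr : 1 ≤ r) (hr_top : r ≠ ∞)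
    (hR : ∀ k, ‖lpAmplitude r (M k) (v k)‖ ≤ R) (hsymm : ∀ k, (θ k).IsSymm) :
    ∃ (φ : ℕ → ℕ) (v₀ : V) (M₀ : (E →L[ℝ] E)ˣ) (q₀ : E) (θ₀ : QuadPhase E), StrictMono φ ∧
      θ₀.IsSymm ∧ Tendsto (fun k => v (φ k)) atTop (𝓝 v₀) ∧
      Tendsto (fun k => M (φ k)) atTop (𝓝 M₀) ∧ Tendsto (fun k => q (φ k)) atTop (𝓝 q₀) ∧
      Tendsto (fun k => θ (φ k)) atTop (𝓝 θ₀) := by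
  obtain ⟨φ₁, M₀, q₀, hφ₁, hM, hq⟩ := hg.exists_subseq_affine_tendsto Φ hf hf0 hr hr_top hR
  obtain ⟨φ₂, v₀, hφ₂, hv⟩ := exists_subseq_amplitude_tendsto hM fun k => hR (φ₁ k)
  have hM' := hM.comp hφ₂.tendsto_atTop
  have hq' := hq.comp hφ₂.tendsto_atTop
  have hg' := hg.comp (hφ₁.comp hφ₂).tendsto_atTop
  obtain ⟨φ₃, θ₀, hφ₃, hθ₀, hθ⟩ :=
    hg'.exists_subseq_phase_tendsto Φ hf hf0 hv hM' hq' fun k => hsymm (φ₁ (φ₂ k))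
  exact ⟨φ₁ ∘ φ₂ ∘ φ₃, v₀, M₀, q₀, θ₀, hφ₁.comp (hφ₂.comp hφ₃), hθ₀, hv.comp hφ₃.tendsto_atTop,
    hM'.comp hφ₃.tendsto_atTop, hq'.comp hφ₃.tendsto_atTop, hθ⟩

end ParameterCompactness

section LpConvergence

variable {E : Type*} [NormedAddCommGroup E]

theorem eventually_norm_sub_le_of_tendstoLocallyUniformly {ι F : Type*} [ProperSpace E]
    [NormedAddCommGroup F] {l : Filter ι} [l.NeBot] {g : ι → E → F} {f : E → F}
    (hlim : TendstoLocallyUniformly g f l) {C : ℝ} {m : ℕ}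
    (hdecay : ∀ᶠ k in l, ∀ x, ‖g k x‖ ≤ C * ((1 + ‖x‖) ^ (m + 1))⁻¹) {ε : ℝ} (hε : 0 < ε) :
    ∀ᶠ k in l, ∀ x, ‖g k x - f x‖ ≤ ε * ((1 + ‖x‖) ^ m)⁻¹ := by
  have hf_le (x : E) : ‖f x‖ ≤ C * ((1 + ‖x‖) ^ (m + 1))⁻¹ :=
    le_of_tendsto (hlim.tendstoLocallyUniformlyOn.tendsto_at (Set.mem_univ x)).norm
      (hdecay.mono fun _ hk => hk x)
  obtain ⟨ρ, hρ⟩ : ∃ ρ, 2 * C / ε ≤ ρ := ⟨_, le_rfl⟩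
  have huniform := tendstoLocallyUniformlyOn_iff_tendstoUniformlyOn_of_compact
    (isCompact_closedBall (0 : E) ρ) |>.mp hlim.tendstoLocallyUniformlyOn
  filter_upwards [hdecay, Metric.tendstoUniformlyOn_iff.mp huniform (ε * ((1 + |ρ|) ^ m)⁻¹)
    (by positivity)] with k hk hk_unif x
  rcases le_total ‖x‖ ρ with hx | hx
  · have hdist := hk_unif x (mem_closedBall_zero_iff.mpr hx)
    rw [dist_comm, dist_eq_norm] at hdist
    refine hdist.le.trans ?_
    gcongr
    exact hx.trans (le_abs_self ρ)
  · have hx_large : 2 * C * (1 + ‖x‖)⁻¹ ≤ ε := by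
      rw [← div_eq_mul_inv, div_le_iff₀ (by positivity)]
      have := (div_le_iff₀ hε).mp (hρ.trans hx)
      linarith
    calc ‖g k x - f x‖ ≤ ‖g k x‖ + ‖f x‖ := norm_sub_le _ _
      _ ≤ C * ((1 + ‖x‖) ^ (m + 1))⁻¹ + C * ((1 + ‖x‖) ^ (m + 1))⁻¹ := add_le_add (hk x) (hf_le x)
      _ = 2 * C * (1 + ‖x‖)⁻¹ * ((1 + ‖x‖) ^ m)⁻¹ := by rw [pow_succ, mul_inv]; ring
      _ ≤ ε * ((1 + ‖x‖) ^ m)⁻¹ := by gcongr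

theorem tendsto_eLpNorm_sub_of_tendstoLocallyUniformly {ι F : Type*} [ProperSpace E]
    [NormedAddCommGroup F] [MeasurableSpace E] [BorelSpace E] {μ : Measure E}
    [μ.HasTemperateGrowth] {l : Filter ι} [l.NeBot] {g : ι → E → F} {f : E → F}
    (hlim : TendstoLocallyUniformly g f l)
    (hdecay : ∀ m, ∃ C, ∀ᶠ k in l, ∀ x, ‖g k x‖ ≤ C * ((1 + ‖x‖) ^ m)⁻¹) (s : ℝ≥0∞) :
    Tendsto (fun k => eLpNorm (g k - f) s μ) l (𝓝 0) := by
  obtain ⟨m, hm⟩ := exists_memLp_inv_one_add_norm_pow μ s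
  obtain ⟨C, hC⟩ := hdecay (m + 1)
  have hsmall : Tendsto (fun ε => ENNReal.ofReal ε *
      eLpNorm (fun x : E => ((1 + ‖x‖) ^ m)⁻¹) s μ) (𝓝[>] 0) (𝓝 0) := by
    have hofReal : Tendsto ENNReal.ofReal (𝓝[>] 0) (𝓝 0) := by
      simpa using ENNReal.continuous_ofReal.continuousWithinAt.tendsto (x := (0 : ℝ))
    simpa using ENNReal.Tendsto.mul_const hofReal (Or.inr hm.eLpNorm_ne_top)
  refine ENNReal.tendsto_nhds_zero.mpr fun δ hδ => ?_
  obtain ⟨ε, hε_le, hε⟩ :=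
    ((ENNReal.tendsto_nhds_zero.mp hsmall δ hδ).and self_mem_nhdsWithin).exists
  filter_upwards [eventually_norm_sub_le_of_tendstoLocallyUniformly hlim hC hε] with k hk
  calc eLpNorm (g k - f) s μ ≤ eLpNorm (ε • fun x : E => ((1 + ‖x‖) ^ m)⁻¹) s μ :=
        eLpNorm_mono_real hk
    _ = ENNReal.ofReal ε * eLpNorm (fun x : E => ((1 + ‖x‖) ^ m)⁻¹) s μ := by
        rw [eLpNorm_const_smul, Real.enorm_of_nonneg (le_of_lt hε)]
    _ ≤ δ := hε_le

variable {V : Type*} [NormedSpace ℝ E] [NormedAddCommGroup V] [NormedSpace ℂ V]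
  (Φ : V →L[ℂ] 𝓢(E, ℂ)) {ι : Type*} {l : Filter ι} {v : ι → V} {v₀ : V} {M : ι → (E →L[ℝ] E)ˣ}
  {M₀ : (E →L[ℝ] E)ˣ} {q : ι → E} {q₀ : E} {θ : ι → QuadPhase E} {θ₀ : QuadPhase E}

theorem tendstoLocallyUniformly_wavePacket (hv : Tendsto v l (𝓝 v₀)) (hM : Tendsto M l (𝓝 M₀))
    (hq : Tendsto q l (𝓝 q₀)) (hθ : Tendsto θ l (𝓝 θ₀)) :
    TendstoLocallyUniformly (fun k => wavePacket Φ (v k) (M k) (q k) (θ k))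
      (wavePacket Φ v₀ M₀ q₀ θ₀) l := by
  refine tendstoLocallyUniformly_iff_forall_tendsto.mpr fun x => ?_
  have hjoint : Tendsto (fun p : ι × E =>
      wavePacket Φ (v p.1) (M p.1) (q p.1) (θ p.1) p.2) (l ×ˢ 𝓝 x)
      (𝓝 (wavePacket Φ v₀ M₀ q₀ θ₀ x)) :=
    tendsto_wavePacket Φ (hv.comp tendsto_fst) (hM.comp tendsto_fst) (hq.comp tendsto_fst)
      (hθ.comp tendsto_fst) tendsto_snd
  exact ((((continuous_wavePacket Φ v₀ M₀ q₀ θ₀).tendsto x).comp tendsto_snd).prodMk_nhds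
    hjoint).mono_right (nhds_le_uniformity _)

theorem one_add_norm_le_mul_one_add_norm_inv_sub (M : (E →L[ℝ] E)ˣ) (q x : E) :
    1 + ‖x‖ ≤ (1 + ‖M.val‖ + ‖q‖) * (1 + ‖M⁻¹.val (x - q)‖) := by
  have hx : M.val (M⁻¹.val (x - q)) + q = x := by
    rw [show M.val (M⁻¹.val (x - q)) = x - q from DFunLike.congr_fun M.mul_inv _, sub_add_cancel]
  have hle : ‖x‖ ≤ ‖M.val‖ * ‖M⁻¹.val (x - q)‖ + ‖q‖ := by
    conv_lhs => rw [← hx]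
    exact norm_add_le_of_le (M.val.le_opNorm _) le_rfl
  nlinarith [norm_nonneg M.val, norm_nonneg q, norm_nonneg (M⁻¹.val (x - q))]

theorem exists_eventually_norm_wavePacket_le (hv : Tendsto v l (𝓝 v₀)) (hM : Tendsto M l (𝓝 M₀))
    (hq : Tendsto q l (𝓝 q₀)) (m : ℕ) :
    ∃ C, ∀ᶠ k in l, ∀ x, ‖wavePacket Φ (v k) (M k) (q k) (θ k) x‖ ≤ C * ((1 + ‖x‖) ^ m)⁻¹ := by
  obtain ⟨C, hC, hle⟩ := exists_norm_apply_le_inv_one_add_norm_pow Φ m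
  have hconst : Tendsto (fun k => C * ‖v k‖ * (1 + ‖(M k).val‖ + ‖q k‖) ^ m) l
      (𝓝 (C * ‖v₀‖ * (1 + ‖M₀.val‖ + ‖q₀‖) ^ m)) :=
    (hv.norm.const_mul C).mul ((((Units.continuous_val.tendsto M₀).comp hM).norm.const_add 1
      |>.add hq.norm).pow m)
  refine ⟨C * ‖v₀‖ * (1 + ‖M₀.val‖ + ‖q₀‖) ^ m + 1,
    (hconst.eventually_lt_const (lt_add_one _)).mono fun k hk x => ?_⟩
  rw [norm_wavePacket]
  refine (hle _ _).trans ((?_ : _ ≤ C * ‖v k‖ * (1 + ‖(M k).val‖ + ‖q k‖) ^ m *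
    ((1 + ‖x‖) ^ m)⁻¹).trans (by gcongr))
  rw [mul_assoc (C * _)]
  gcongr
  rw [inv_le_iff_one_le_mul₀ (by positivity), mul_right_comm, ← mul_pow, ← div_eq_mul_inv,
    one_le_div (by positivity)]
  gcongr
  exact one_add_norm_le_mul_one_add_norm_inv_sub _ _ _

theorem tendsto_eLpNorm_wavePacket_sub [FiniteDimensional ℝ E] [MeasurableSpace E] [BorelSpace E]
    {μ : Measure E} [μ.HasTemperateGrowth] [l.NeBot] (hv : Tendsto v l (𝓝 v₀))
    (hM : Tendsto M l (𝓝 M₀)) (hq : Tendsto q l (𝓝 q₀)) (hθ : Tendsto θ l (𝓝 θ₀)) (s : ℝ≥0∞) :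
    Tendsto (fun k => eLpNorm (wavePacket Φ (v k) (M k) (q k) (θ k) - wavePacket Φ v₀ M₀ q₀ θ₀) s μ)
      l (𝓝 0) :=
  have : ProperSpace E := FiniteDimensional.proper ℝ E
  tendsto_eLpNorm_sub_of_tendstoLocallyUniformly
    (tendstoLocallyUniformly_wavePacket Φ hv hM hq hθ)
    (exists_eventually_norm_wavePacket_le Φ hv hM hq) s

theorem TendstoDistrib.ae_eq_wavePacket [FiniteDimensional ℝ E] [MeasurableSpace E] [BorelSpace E]
    {μ : Measure E} [μ.IsAddHaarMeasure] [l.NeBot] {f : E → ℂ}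
    (hg : TendstoDistrib (fun k => wavePacket Φ (v k) (M k) (q k) (θ k)) l f μ)
    (hf : LocallyIntegrable f μ) (hv : Tendsto v l (𝓝 v₀))
    (hM : Tendsto M l (𝓝 M₀)) (hq : Tendsto q l (𝓝 q₀)) (hθ : Tendsto θ l (𝓝 θ₀)) :
    f =ᵐ[μ] wavePacket Φ v₀ M₀ q₀ θ₀ := by
  have hL1 := tendsto_eLpNorm_wavePacket_sub Φ (μ := μ) hv hM hq hθ 1
  refine (hg.ae_eq_on_of_tendsto_eLpNorm hf
    (fun _ => (continuous_wavePacket Φ _ _ _ _).locallyIntegrable)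
    (continuous_wavePacket Φ _ _ _ _).locallyIntegrable isOpen_univ le_rfl fun K _ _ => ?_).mono
    fun x hx => hx trivial
  exact tendsto_of_tendsto_of_tendsto_of_le_of_le tendsto_const_nhds hL1 (fun _ => zero_le)
    fun _ => eLpNorm_mono_measure _ Measure.restrict_le_self

end LpConvergence

section PolynomialFunctions

variable {d N : ℕ}

/-- The complex affine functions on `ℝ^d`. -/
def affineFunctions (d : ℕ) : Submodule ℂ ((Fin d → ℝ) → ℂ) :=
  Submodule.span ℂ (insert 1 (Set.range fun i x => (x i : ℂ)))

/-- The complex polynomial functions on `ℝ^d` of total degree at most `N`. Unlike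
`boxPolyFunctions`, this space is stable under affine changes of variable. -/
def polyFunctions (d N : ℕ) : Submodule ℂ ((Fin d → ℝ) → ℂ) :=
  affineFunctions d ^ N

/-- The complex polynomial functions on `ℝ^d` of degree at most `ν i` in each variable `x i`. -/
def boxPolyFunctions (ν : Fin d → ℕ) : Submodule ℂ ((Fin d → ℝ) → ℂ) :=
  Submodule.span ℂ (Set.range fun (θ : (i : Fin d) → Fin (ν i + 1)) (x : Fin d → ℝ) =>
    ∏ i, (x i : ℂ) ^ (θ i : ℕ))

instance finiteDimensional_polyFunctions : FiniteDimensional ℂ (polyFunctions d N) :=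
  Module.Finite.of_fg (.pow (Submodule.fg_span ((Set.finite_range _).insert _)) N)

instance finiteDimensional_boxPolyFunctions (ν : Fin d → ℕ) :
    FiniteDimensional ℂ (boxPolyFunctions ν) :=
  Module.Finite.of_fg (Submodule.fg_span (Set.finite_range _))

theorem one_mem_affineFunctions : 1 ∈ affineFunctions d :=
  Submodule.subset_span (Set.mem_insert _ _)

theorem coord_mem_affineFunctions (i : Fin d) :
    (fun x : Fin d → ℝ => (x i : ℂ)) ∈ affineFunctions d :=
  Submodule.subset_span (Set.mem_insert_of_mem _ ⟨i, rfl⟩)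

theorem comp_affine_mem_affineFunctions {w : (Fin d → ℝ) → ℂ} (hw : w ∈ affineFunctions d)
    (M : (Fin d → ℝ) →L[ℝ] (Fin d → ℝ)) (q : Fin d → ℝ) :
    (fun y => w (M y + q)) ∈ affineFunctions d := by
  induction hw using Submodule.span_induction with
  | mem w h =>
    rcases h with rfl | ⟨i, rfl⟩
    · exact one_mem_affineFunctions
    · have hcoord : (fun y => ((M y + q) i : ℂ)) =
          ∑ j, (M (Pi.single j 1) i : ℂ) • (fun y : Fin d → ℝ => (y j : ℂ)) + (q i : ℂ) • 1 := by
        funext y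
        conv_lhs => rw [pi_eq_sum_univ' y]
        simp [mul_comm]
      rw [hcoord]
      exact add_mem (sum_mem fun j _ => Submodule.smul_mem _ _ (coord_mem_affineFunctions j))
        (Submodule.smul_mem _ _ one_mem_affineFunctions)
  | zero => exact zero_mem _
  | add _ _ _ _ h₁ h₂ => exact add_mem h₁ h₂
  | smul c _ _ h => exact Submodule.smul_mem _ c h

theorem comp_affine_mem_polyFunctions {w : (Fin d → ℝ) → ℂ} (hw : w ∈ polyFunctions d N)
    (M : (Fin d → ℝ) →L[ℝ] (Fin d → ℝ)) (q : Fin d → ℝ) :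
    (fun y => w (M y + q)) ∈ polyFunctions d N := by
  let comp : ((Fin d → ℝ) → ℂ) →ₐ[ℂ] ((Fin d → ℝ) → ℂ) :=
    AlgHom.pi fun y => Pi.evalAlgHom ℂ (fun _ : Fin d → ℝ => ℂ) (M y + q)
  have hcomp : (affineFunctions d).map comp.toLinearMap ≤ affineFunctions d :=
    Submodule.map_le_iff_le_comap.mpr fun w hw => comp_affine_mem_affineFunctions hw M q
  have hpow : (polyFunctions d N).map comp.toLinearMap ≤ polyFunctions d N := by
    rw [polyFunctions, Submodule.map_pow]
    exact pow_le_pow_left' hcomp N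
  exact hpow (Submodule.mem_map_of_mem hw)

theorem prod_pow_mem_affineFunctions_pow (θ : Fin d → ℕ) (s : Finset (Fin d)) :
    ∏ i ∈ s, (fun x : Fin d → ℝ => (x i : ℂ)) ^ θ i ∈ affineFunctions d ^ ∑ i ∈ s, θ i := by
  induction s using Finset.cons_induction with
  | empty => simp
  | cons i s hi ih =>
    rw [Finset.prod_cons, Finset.sum_cons, pow_add]
    exact Submodule.mul_mem_mul (Submodule.pow_mem_pow _ (coord_mem_affineFunctions i) _) ih

theorem boxPolyFunctions_le_polyFunctions (ν : Fin d → ℕ) :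
    boxPolyFunctions ν ≤ polyFunctions d (∑ i, ν i) := by
  rw [boxPolyFunctions, Submodule.span_le]
  rintro _ ⟨θ, rfl⟩
  have hle : ∑ i, (θ i : ℕ) ≤ ∑ i, ν i := Finset.sum_le_sum fun i _ => Nat.lt_succ_iff.mp (θ i).2
  have hmem := pow_le_pow_right₀ (Submodule.one_le.mpr one_mem_affineFunctions) hle
    (prod_pow_mem_affineFunctions_pow (fun i => (θ i : ℕ)) Finset.univ)
  convert! hmem using 1
  funext x
  simp

theorem mem_boxPolyFunctions {ν : Fin d → ℕ} {P : (Fin d → ℝ) → ℂ} :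
    P ∈ boxPolyFunctions ν ↔ ∃ c : ((i : Fin d) → Fin (ν i + 1)) → ℂ,
      ∀ x, P x = ∑ θ, c θ * ∏ i, (x i : ℂ) ^ (θ i : ℕ) := by
  simp only [boxPolyFunctions, Submodule.mem_span_range_iff_exists_fun, funext_iff,
    Finset.sum_apply, Pi.smul_apply, smul_eq_mul, eq_comm]

theorem hasTemperateGrowth_of_mem_affineFunctions {w : (Fin d → ℝ) → ℂ}
    (hw : w ∈ affineFunctions d) : w.HasTemperateGrowth := by
  induction hw using Submodule.span_induction with
  | mem w h =>
    rcases h with rfl | ⟨i, rfl⟩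
    · exact .const 1
    · exact Function.Complex.hasTemperateGrowth_ofReal.comp
        (ContinuousLinearMap.proj (R := ℝ) (φ := fun _ : Fin d => ℝ) i).hasTemperateGrowth
  | zero => exact .zero
  | add _ _ _ _ h₁ h₂ => exact h₁.add h₂
  | smul c _ _ h => exact (Function.HasTemperateGrowth.const c).mul h

theorem hasTemperateGrowth_of_mem_polyFunctions {w : (Fin d → ℝ) → ℂ}
    (hw : w ∈ polyFunctions d N) : w.HasTemperateGrowth := by
  induction hw using Submodule.pow_induction_on_left' with
  | algebraMap c => exact .const c
  | add _ _ _ _ _ h₁ h₂ => exact h₁.add h₂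
  | mem_mul m hm _ _ _ h => exact (hasTemperateGrowth_of_mem_affineFunctions hm).mul h

end PolynomialFunctions

section GaussianShapes

theorem exists_pow_mul_norm_iteratedFDeriv_exp_le {E : Type*} [NormedAddCommGroup E]
    [NormedSpace ℝ E] {f : E → ℝ} (hf : f.HasTemperateGrowth)
    (hdecay : ∀ m : ℕ, ∃ C, ∀ x, (1 + ‖x‖) ^ m * Real.exp (f x) ≤ C) (k n : ℕ) :
    ∃ C, ∀ x, ‖x‖ ^ k * ‖iteratedFDeriv ℝ n (fun x => Real.exp (f x)) x‖ ≤ C := by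
  obtain ⟨m, D, hD, hf_le⟩ := hf.norm_iteratedFDeriv_le_uniform n
  obtain ⟨C, hC⟩ := hdecay (k + m * n)
  refine ⟨n.factorial * (1 + D) ^ n * C, fun x => ?_⟩
  have hchain : ‖iteratedFDeriv ℝ n (Real.exp ∘ f) x‖ ≤
      n.factorial * Real.exp (f x) * ((1 + D) * (1 + ‖x‖) ^ m) ^ n := by
    refine norm_iteratedFDeriv_comp_le Real.contDiff_exp hf.1 (mod_cast le_top) x
      (fun i _ => ?_) fun i hi hin => ?_
    · rw [norm_iteratedFDeriv_eq_norm_iteratedDeriv, iteratedDeriv_eq_iterate, Real.iter_deriv_exp,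
        Real.norm_of_nonneg (Real.exp_nonneg _)]
    · have hone : 1 ≤ (1 + ‖x‖) ^ m := one_le_pow₀ (by linarith [norm_nonneg x])
      calc ‖iteratedFDeriv ℝ i f x‖ ≤ D * (1 + ‖x‖) ^ m := hf_le i hin x
        _ ≤ (1 + D) * (1 + ‖x‖) ^ m := by gcongr; linarith
        _ ≤ ((1 + D) * (1 + ‖x‖) ^ m) ^ i :=
          le_self_pow₀ (one_le_mul_of_one_le_of_one_le (by linarith) hone) (by lia)
  calc ‖x‖ ^ k * ‖iteratedFDeriv ℝ n (Real.exp ∘ f) x‖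
      ≤ (1 + ‖x‖) ^ k * (n.factorial * Real.exp (f x) * ((1 + D) * (1 + ‖x‖) ^ m) ^ n) := by
        gcongr
        linarith
    _ = n.factorial * (1 + D) ^ n * ((1 + ‖x‖) ^ (k + m * n) * Real.exp (f x)) := by
        rw [mul_pow, ← pow_mul, pow_add]
        ring
    _ ≤ n.factorial * (1 + D) ^ n * C := by gcongr; exact hC x

variable {d : ℕ}

theorem exists_pow_mul_exp_neg_sum_sq_le (m : ℕ) :
    ∃ C, ∀ y : Fin d → ℝ, (1 + ‖y‖) ^ m * Real.exp (-(∑ i, y i ^ 2) / 2) ≤ C := by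
  refine ⟨m.factorial * Real.exp (3 / 2), fun y => ?_⟩
  have hnorm : ‖y‖ ^ 2 ≤ ∑ i, y i ^ 2 := by
    rw [← Real.le_sqrt (norm_nonneg y) (by positivity),
      pi_norm_le_iff_of_nonneg (Real.sqrt_nonneg _)]
    refine fun i => Real.le_sqrt_of_sq_le ?_
    rw [Real.norm_eq_abs, sq_abs]
    exact Finset.single_le_sum (f := fun i => y i ^ 2) (fun _ _ => sq_nonneg _) (Finset.mem_univ i)
  have hpow : (1 + ‖y‖) ^ m ≤ m.factorial * Real.exp (1 + ‖y‖) :=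
    (div_le_iff₀' (by positivity)).mp (Real.pow_div_factorial_le_exp _ (by positivity) m)
  calc (1 + ‖y‖) ^ m * Real.exp (-(∑ i, y i ^ 2) / 2)
      ≤ (m.factorial * Real.exp (1 + ‖y‖)) * Real.exp (-(∑ i, y i ^ 2) / 2) := by gcongr
    _ = m.factorial * Real.exp (1 + ‖y‖ - (∑ i, y i ^ 2) / 2) := by
        rw [mul_assoc, ← Real.exp_add]
        ring_nf
    _ ≤ m.factorial * Real.exp (3 / 2) := by
        gcongr
        nlinarith [sq_nonneg (‖y‖ - 1)]

theorem hasTemperateGrowth_neg_sum_sq_div_two :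
    (fun y : Fin d → ℝ => -(∑ i, y i ^ 2) / 2).HasTemperateGrowth := by
  have hcoord (i : Fin d) : (fun y : Fin d → ℝ => y i).HasTemperateGrowth :=
    (ContinuousLinearMap.proj (R := ℝ) (φ := fun _ : Fin d => ℝ) i).hasTemperateGrowth
  simp only [div_eq_mul_inv]
  exact (Function.HasTemperateGrowth.sum fun i _ => (hcoord i).pow 2).neg.mul (.const _)

/-- The standard Gaussian `exp (-|y|² / 2)` on `ℝ^d`, where `|y|` is the Euclidean norm, as a
Schwartz function. -/
noncomputable def standardGaussian (d : ℕ) : 𝓢(Fin d → ℝ, ℝ) where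
  toFun y := Real.exp (-(∑ i, y i ^ 2) / 2)
  smooth' := Real.contDiff_exp.comp hasTemperateGrowth_neg_sum_sq_div_two.1
  decay' := exists_pow_mul_norm_iteratedFDeriv_exp_le hasTemperateGrowth_neg_sum_sq_div_two
    exists_pow_mul_exp_neg_sum_sq_le

theorem standardGaussian_apply (y : Fin d → ℝ) :
    standardGaussian d y = Real.exp (-(∑ i, y i ^ 2) / 2) :=
  rfl

/-- The product of a polynomial function with the standard Gaussian, as a linear map into the
Schwartz space. -/
noncomputable def mulStandardGaussian (d N : ℕ) : polyFunctions d N →ₗ[ℂ] 𝓢(Fin d → ℝ, ℂ) where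
  toFun w := SchwartzMap.bilinLeftCLM (ContinuousLinearMap.lsmul ℝ ℝ)
    (hasTemperateGrowth_of_mem_polyFunctions w.2) (standardGaussian d)
  map_add' w w' := by ext y; exact smul_add (standardGaussian d y) (w.1 y) (w'.1 y)
  map_smul' c w := by ext y; exact smul_comm (standardGaussian d y) c (w.1 y)

theorem mulStandardGaussian_apply {N : ℕ} (w : polyFunctions d N) (y : Fin d → ℝ) :
    mulStandardGaussian d N w y = w.1 y * standardGaussian d y :=
  (real_smul).trans (mul_comm _ _)

/-- The linear family of shapes `w · exp (-|y|² / 2)` with `w` a polynomial function of total degree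
at most `N`, parametrized by the coordinates of `w` in a basis so that the parameter space is
normed. -/
noncomputable def polyGaussian (d N : ℕ) :
    (Fin (Module.finrank ℂ (polyFunctions d N)) → ℂ) →L[ℂ] 𝓢(Fin d → ℝ, ℂ) :=
  (mulStandardGaussian d N ∘ₗ
    (Module.finBasis ℂ (polyFunctions d N)).equivFun.symm.toLinearMap).toContinuousLinearMap

theorem mulStandardGaussian_injective (d N : ℕ) : Function.Injective (mulStandardGaussian d N) := by
  intro w w' h
  ext y
  have hy := DFunLike.congr_fun h y
  rw [mulStandardGaussian_apply, mulStandardGaussian_apply] at hy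
  exact mul_right_cancel₀ (ofReal_ne_zero.mpr (Real.exp_ne_zero _)) hy

theorem polyGaussian_injective (d N : ℕ) : Function.Injective (polyGaussian d N) :=
  (mulStandardGaussian_injective d N).comp (LinearEquiv.injective _)

end GaussianShapes

section NormalForm

variable {d : ℕ}

/-- The algebra isomorphism sending a real matrix to the operator it defines on `ℝ^d`. -/
noncomputable def mulVecCLM (d : ℕ) :
    Matrix (Fin d) (Fin d) ℝ ≃ₐ[ℝ] ((Fin d → ℝ) →L[ℝ] (Fin d → ℝ)) :=
  Matrix.toLinAlgEquiv'.trans (Module.End.toContinuousLinearMap (Fin d → ℝ))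

theorem mulVecCLM_apply (R : Matrix (Fin d) (Fin d) ℝ) (z : Fin d → ℝ) :
    mulVecCLM d R z = R.mulVec z :=
  rfl

theorem dotProduct_star_mul_self_mulVec (R : Matrix (Fin d) (Fin d) ℝ) (z : Fin d → ℝ) :
    z ⬝ᵥ (star R * R).mulVec z = ∑ i, mulVecCLM d R z i ^ 2 := by
  rw [Matrix.star_eq_conjTranspose, Matrix.conjTranspose_eq_transpose_of_trivial,
    ← Matrix.mulVec_mulVec, Matrix.dotProduct_mulVec, Matrix.vecMul_transpose, dotProduct]
  simp only [mulVecCLM_apply, pow_two]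

open scoped MatrixOrder in
theorem posDef_iff_exists_isUnit_star_mul_self {A : Matrix (Fin d) (Fin d) ℝ} :
    A.PosDef ↔ ∃ R, IsUnit R ∧ A = star R * R := by
  rw [← Matrix.isStrictlyPositive_iff_posDef]
  exact CStarAlgebra.isStrictlyPositive_iff_eq_star_mul_self

theorem exists_units_sum_sq_inv_eq {A : Matrix (Fin d) (Fin d) ℝ} (hA : A.PosDef) :
    ∃ M : ((Fin d → ℝ) →L[ℝ] (Fin d → ℝ))ˣ, ∀ z, ∑ i, M⁻¹.val z i ^ 2 = z ⬝ᵥ A.mulVec z := by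
  obtain ⟨R, hR, rfl⟩ := posDef_iff_exists_isUnit_star_mul_self.mp hA
  obtain ⟨u, hu⟩ := hR.map (mulVecCLM d)
  refine ⟨u⁻¹, fun z => ?_⟩
  rw [inv_inv, hu, dotProduct_star_mul_self_mulVec]

theorem exists_posDef_dotProduct_mulVec_eq (M : ((Fin d → ℝ) →L[ℝ] (Fin d → ℝ))ˣ) :
    ∃ A : Matrix (Fin d) (Fin d) ℝ, A.PosDef ∧
      ∀ z, ∑ i, M⁻¹.val z i ^ 2 = z ⬝ᵥ A.mulVec z := by
  let R := (mulVecCLM d).symm M⁻¹.val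
  refine ⟨star R * R, posDef_iff_exists_isUnit_star_mul_self.mpr
    ⟨R, M⁻¹.isUnit.map (mulVecCLM d).symm, rfl⟩, fun z => ?_⟩
  rw [dotProduct_star_mul_self_mulVec, AlgEquiv.apply_symm_apply]

theorem exists_symm_bilin_eq {B : Matrix (Fin d) (Fin d) ℝ} (hB : B.IsSymm) :
    ∃ β : (Fin d → ℝ) →L[ℝ] (Fin d → ℝ) →L[ℝ] ℝ,
      (∀ x y, β x y = β y x) ∧ ∀ z, z ⬝ᵥ B.mulVec z = β z z := by
  have hsymm := Matrix.isSymm_toBilin'_iff_isSymm.mpr hB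
  exact ⟨LinearMap.toContinuousBilinearMap (Matrix.toBilin' B), fun x y => hsymm.eq x y,
    fun z => (Matrix.toBilin'_apply' B z z).symm⟩

theorem exists_isSymm_matrix_eq {β : (Fin d → ℝ) →L[ℝ] (Fin d → ℝ) →L[ℝ] ℝ}
    (hβ : ∀ x y, β x y = β y x) :
    ∃ B : Matrix (Fin d) (Fin d) ℝ, B.IsSymm ∧ ∀ z, z ⬝ᵥ B.mulVec z = β z z := by
  let b : LinearMap.BilinForm ℝ (Fin d → ℝ) :=
    LinearMap.toContinuousLinearMap.symm.toLinearMap ∘ₗ β.toLinearMap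
  refine ⟨b.toMatrix', LinearMap.BilinForm.isSymm_toMatrix'_iff_isSymm.mpr ⟨hβ⟩, fun z => ?_⟩
  rw [← Matrix.toBilin'_apply', Matrix.toBilin'_toMatrix']
  rfl

theorem sum_sum_add_I_mul_eq (A B : Matrix (Fin d) (Fin d) ℝ) (z : Fin d → ℝ) :
    ∑ i, ∑ j, ((A i j : ℂ) + I * (B i j : ℂ)) * (z i : ℂ) * (z j : ℂ) =
      ((z ⬝ᵥ A.mulVec z : ℝ) : ℂ) + I * ((z ⬝ᵥ B.mulVec z : ℝ) : ℂ) := by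
  simp only [dotProduct, Matrix.mulVec, ofReal_sum, ofReal_mul, Finset.mul_sum,
    ← Finset.sum_add_distrib]
  exact Finset.sum_congr rfl fun i _ => Finset.sum_congr rfl fun j _ => by ring

theorem exp_mul_exp_eq_standardGaussian_mul_chirp {A B : Matrix (Fin d) (Fin d) ℝ}
    {M : ((Fin d → ℝ) →L[ℝ] (Fin d → ℝ))ˣ} {β : (Fin d → ℝ) →L[ℝ] (Fin d → ℝ) →L[ℝ] ℝ}
    {p : Fin d → ℝ} {m : (Fin d → ℝ) →L[ℝ] ℝ}
    (hA : ∀ z, ∑ i, M⁻¹.val z i ^ 2 = z ⬝ᵥ A.mulVec z)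
    (hB : ∀ z, z ⬝ᵥ B.mulVec z = -2 * β z z) (hβ : ∀ x y, β x y = β y x)
    (hp : ∀ z, p ⬝ᵥ z = m z) (q x : Fin d → ℝ) :
    exp (-(1/2 : ℂ) * ∑ i, ∑ j, ((A i j : ℂ) + I * (B i j : ℂ)) *
        ((x i : ℂ) - (q i : ℂ)) * ((x j : ℂ) - (q j : ℂ))) *
      exp (I * ∑ i, (p i : ℂ) * ((x i : ℂ) - (q i : ℂ))) =
    exp (I * ((β q q - m q : ℝ) : ℂ)) *
      (standardGaussian d (M⁻¹.val (x - q)) * chirp (β, m - (2 : ℝ) • β q) x) := by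
  have hquad := sum_sum_add_I_mul_eq A B (x - q)
  have hlin : ∑ i, (p i : ℂ) * ((x i : ℂ) - (q i : ℂ)) = ((m (x - q) : ℝ) : ℂ) := by
    simp [← hp, dotProduct]
  have hexpand : β (x - q) (x - q) = β x x - 2 * β q x + β q q := by
    simp only [map_sub, _root_.sub_apply, hβ x q]
    ring
  simp only [Pi.sub_apply, ofReal_sub] at hquad
  rw [hquad, hlin, hB, hexpand, ← hA, standardGaussian_apply, chirp, ofReal_exp, ← exp_add,
    ← exp_add, ← exp_add, map_sub m, _root_.sub_apply, _root_.smul_apply, smul_eq_mul]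
  congr 1
  push_cast
  ring

theorem mem_gaussianPacket_iff {g : (Fin d → ℝ) → ℂ} :
    g ∈ GaussianPacket d ↔ ∃ (a : ℂ) (M : ((Fin d → ℝ) →L[ℝ] (Fin d → ℝ))ˣ) (q : Fin d → ℝ)
      (θ : QuadPhase (Fin d → ℝ)), θ.IsSymm ∧
      ∀ x, g x = a * (standardGaussian d (M⁻¹.val (x - q)) * chirp θ x) := by
  constructor
  · rintro ⟨a, p, q, A, B, hA, hB, hg⟩
    obtain ⟨M, hM⟩ := exists_units_sum_sq_inv_eq hA
    obtain ⟨β, hβ, hBβ⟩ := exists_symm_bilin_eq (hB.smul (-(1 / 2) : ℝ))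
    let m : (Fin d → ℝ) →L[ℝ] ℝ := (dotProductEquiv ℝ (Fin d) p).toContinuousLinearMap
    have hp (z : Fin d → ℝ) : p ⬝ᵥ z = m z := rfl
    refine ⟨a * exp (I * ((β q q - m q : ℝ) : ℂ)), M, q, (β, m - (2 : ℝ) • β q), hβ, fun x => ?_⟩
    rw [hg, mul_assoc, mul_assoc, exp_mul_exp_eq_standardGaussian_mul_chirp hM (fun z => ?_) hβ
      hp]
    rw [← hBβ, Matrix.smul_mulVec, dotProduct_smul, smul_eq_mul]
    ring
  · rintro ⟨a, M, q, ⟨β, ℓ⟩, hβ, hg⟩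
    obtain ⟨A, hA, hMA⟩ := exists_posDef_dotProduct_mulVec_eq M
    obtain ⟨B, hB, hBβ⟩ := exists_isSymm_matrix_eq hβ
    let m : (Fin d → ℝ) →L[ℝ] ℝ := ℓ + (2 : ℝ) • β q
    let p := (dotProductEquiv ℝ (Fin d)).symm m.toLinearMap
    have hp (z : Fin d → ℝ) : p ⬝ᵥ z = m z :=
      DFunLike.congr_fun ((dotProductEquiv ℝ (Fin d)).apply_symm_apply m.toLinearMap) z
    refine ⟨a * (exp (I * ((β q q - m q : ℝ) : ℂ)))⁻¹, p, q, A, (-2 : ℝ) • B, hA, hB.smul _,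
      fun x => ?_⟩
    rw [hg, mul_assoc, exp_mul_exp_eq_standardGaussian_mul_chirp hMA (fun z => ?_) hβ hp,
      add_sub_cancel_right, mul_assoc, inv_mul_cancel_left₀ (exp_ne_zero _)]
    rw [← hBβ, Matrix.smul_mulVec, dotProduct_smul, smul_eq_mul]

theorem mem_gaussianPolyPacket_iff {ν : Fin d → ℕ} {f : (Fin d → ℝ) → ℂ} :
    f ∈ GaussianPolyPacket d ν ↔ ∃ P ∈ boxPolyFunctions ν,
      ∃ (M : ((Fin d → ℝ) →L[ℝ] (Fin d → ℝ))ˣ) (q : Fin d → ℝ) (θ : QuadPhase (Fin d → ℝ)),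
        θ.IsSymm ∧ ∀ x, f x = P x * (standardGaussian d (M⁻¹.val (x - q)) * chirp θ x) := by
  constructor
  · rintro ⟨c, g, hg, hf⟩
    obtain ⟨a, M, q, θ, hθ, hg⟩ := mem_gaussianPacket_iff.mp hg
    let P (x : Fin d → ℝ) : ℂ := ∑ θ, c θ * ∏ i, (x i : ℂ) ^ (θ i : ℕ)
    have hP : P ∈ boxPolyFunctions ν := mem_boxPolyFunctions.mpr ⟨c, fun _ => rfl⟩
    refine ⟨a • P, Submodule.smul_mem _ a hP, M, q, θ, hθ, fun x => ?_⟩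
    rw [hf, hg, Pi.smul_apply, smul_eq_mul, mul_left_comm, mul_assoc]
  · rintro ⟨P, hP, M, q, θ, hθ, hf⟩
    obtain ⟨c, hc⟩ := mem_boxPolyFunctions.mp hP
    refine ⟨c, fun x => standardGaussian d (M⁻¹.val (x - q)) * chirp θ x,
      mem_gaussianPacket_iff.mpr ⟨1, M, q, θ, hθ, fun x => ?_⟩, fun x => ?_⟩
    · rw [one_mul]
    · rw [hf, hc]

/-- The polynomial factor of a wave packet with shape in the family `polyGaussian d N`. -/
noncomputable def polyFactor (N : ℕ) (v : Fin (Module.finrank ℂ (polyFunctions d N)) → ℂ)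
    (M : ((Fin d → ℝ) →L[ℝ] (Fin d → ℝ))ˣ) (q x : Fin d → ℝ) : ℂ :=
  polyGaussian d N v (M⁻¹.val (x - q)) / standardGaussian d (M⁻¹.val (x - q))

theorem ofReal_standardGaussian_ne_zero (y : Fin d → ℝ) : (standardGaussian d y : ℂ) ≠ 0 :=
  ofReal_ne_zero.mpr (Real.exp_ne_zero _)

theorem wavePacket_polyGaussian_eq {N : ℕ} (v : Fin (Module.finrank ℂ (polyFunctions d N)) → ℂ)
    (M : ((Fin d → ℝ) →L[ℝ] (Fin d → ℝ))ˣ) (q : Fin d → ℝ) (θ : QuadPhase (Fin d → ℝ))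
    (x : Fin d → ℝ) :
    wavePacket (polyGaussian d N) v M q θ x =
      polyFactor N v M q x * (standardGaussian d (M⁻¹.val (x - q)) * chirp θ x) := by
  rw [polyFactor, ← mul_assoc, div_mul_cancel₀ _ (ofReal_standardGaussian_ne_zero _), wavePacket]

theorem exists_polyFactor_eq {N : ℕ} {P : (Fin d → ℝ) → ℂ} (hP : P ∈ polyFunctions d N)
    (M : ((Fin d → ℝ) →L[ℝ] (Fin d → ℝ))ˣ) (q : Fin d → ℝ) :
    ∃ v, polyFactor N v M q = P := by
  let w : polyFunctions d N := ⟨_, comp_affine_mem_polyFunctions hP M.val q⟩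
  refine ⟨(Module.finBasis ℂ (polyFunctions d N)).equivFun w, funext fun x => ?_⟩
  have hM : M.val (M⁻¹.val (x - q)) = x - q := DFunLike.congr_fun M.mul_inv _
  have hΦ : polyGaussian d N ((Module.finBasis ℂ (polyFunctions d N)).equivFun w) =
      mulStandardGaussian d N w :=
    congrArg (mulStandardGaussian d N) (LinearEquiv.symm_apply_apply _ w)
  rw [polyFactor, hΦ, mulStandardGaussian_apply,
    mul_div_cancel_right₀ _ (ofReal_standardGaussian_ne_zero _)]
  change P (M.val (M⁻¹.val (x - q)) + q) = P x
  rw [hM, sub_add_cancel]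

theorem mem_gaussianPolyPacket_iff_exists_wavePacket {ν : Fin d → ℕ} {f : (Fin d → ℝ) → ℂ} :
    f ∈ GaussianPolyPacket d ν ↔ ∃ v M q θ, θ.IsSymm ∧
      polyFactor (∑ i, ν i) v M q ∈ boxPolyFunctions ν ∧
      f = wavePacket (polyGaussian d (∑ i, ν i)) v M q θ := by
  simp only [funext_iff, wavePacket_polyGaussian_eq, mem_gaussianPolyPacket_iff]
  constructor
  · rintro ⟨P, hP, M, q, θ, hθ, hf⟩
    obtain ⟨v, rfl⟩ := exists_polyFactor_eq (boxPolyFunctions_le_polyFunctions ν hP) M q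
    exact ⟨v, M, q, θ, hθ, hP, hf⟩
  · rintro ⟨v, M, q, θ, hθ, hP, hf⟩
    exact ⟨_, hP, M, q, θ, hθ, hf⟩

theorem polyFactor_mem_boxPolyFunctions_of_tendsto {ν : Fin d → ℕ} {N : ℕ} {ι : Type*}
    {l : Filter ι} [l.NeBot] {v : ι → Fin (Module.finrank ℂ (polyFunctions d N)) → ℂ}
    {v₀ : Fin (Module.finrank ℂ (polyFunctions d N)) → ℂ}
    {M : ι → ((Fin d → ℝ) →L[ℝ] (Fin d → ℝ))ˣ} {M₀ : ((Fin d → ℝ) →L[ℝ] (Fin d → ℝ))ˣ}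
    {q : ι → Fin d → ℝ} {q₀ : Fin d → ℝ} (hv : Tendsto v l (𝓝 v₀)) (hM : Tendsto M l (𝓝 M₀))
    (hq : Tendsto q l (𝓝 q₀)) (hbox : ∀ k, polyFactor N (v k) (M k) (q k) ∈ boxPolyFunctions ν) :
    polyFactor N v₀ M₀ q₀ ∈ boxPolyFunctions ν := by
  refine (Submodule.closed_of_finiteDimensional _).mem_of_tendsto (b := l)
    (tendsto_pi_nhds.mpr fun x => ?_) (Eventually.of_forall hbox)
  have hy : Tendsto (fun k => (M k)⁻¹.val (x - q k)) l (𝓝 (M₀⁻¹.val (x - q₀))) :=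
    tendsto_clm_apply ((Units.continuous_coe_inv.tendsto M₀).comp hM) (hq.const_sub x)
  exact (tendsto_schwartz_apply (polyGaussian d N) hv hy).div
    ((continuous_ofReal.comp (standardGaussian d).continuous).tendsto _ |>.comp hy)
    (ofReal_standardGaussian_ne_zero _)

end NormalForm

theorem exists_subseq_tendsto_eLpNorm_sub {d : ℕ} {ν : Fin d → ℕ} {r : ℝ≥0∞} (hr : 1 ≤ r)
    (hr_top : r ≠ ∞) {g : ℕ → (Fin d → ℝ) → ℂ} (hg : ∀ k, g k ∈ GaussianPolyPacket d ν) {C : ℝ≥0∞}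
    (hC : C ≠ ∞) (hbound : ∀ k, eLpNorm (g k) r volume ≤ C) {f : (Fin d → ℝ) → ℂ}
    (hf : LocallyIntegrable f) (hgf : TendstoDistrib g atTop f volume) (hf0 : ¬ f =ᵐ[volume] 0) :
    ∃ (φ : ℕ → ℕ) (h : (Fin d → ℝ) → ℂ), StrictMono φ ∧ h ∈ GaussianPolyPacket d ν ∧
      f =ᵐ[volume] h ∧ ∀ s, Tendsto (fun k => eLpNorm (g (φ k) - f) s volume) atTop (𝓝 0) := by
  choose v M q θ hsymm hbox hwave using
    fun k => mem_gaussianPolyPacket_iff_exists_wavePacket.mp (hg k)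
  obtain rfl := funext hwave
  let Φ := polyGaussian d (∑ i, ν i)
  obtain ⟨R, hR⟩ :=
    exists_norm_lpAmplitude_le Φ (μ := volume) (polyGaussian_injective _ _) hr hr_top hC
  obtain ⟨φ, v₀, M₀, q₀, θ₀, hφ, hθ₀, hv, hM, hq, hθ⟩ :=
    hgf.exists_subseq_parameters_tendsto Φ hf hf0 hr hr_top (fun k => hR _ _ _ _ (hbound k)) hsymm
  have hfh : f =ᵐ[volume] wavePacket Φ v₀ M₀ q₀ θ₀ :=
    (hgf.comp hφ.tendsto_atTop).ae_eq_wavePacket Φ hf hv hM hq hθ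
  refine ⟨φ, _, hφ, mem_gaussianPolyPacket_iff_exists_wavePacket.mpr ⟨v₀, M₀, q₀, θ₀, hθ₀,
    polyFactor_mem_boxPolyFunctions_of_tendsto hv hM hq fun k => hbox (φ k), rfl⟩, hfh,
    fun s => ?_⟩
  refine (tendsto_eLpNorm_wavePacket_sub Φ (μ := volume) hv hM hq hθ s).congr fun k => ?_
  exact eLpNorm_congr_ae ((EventuallyEq.refl _ _).sub hfh.symm)

/-- Let `(g_k)` be a sequence in `𝒢_ν` which is bounded in `L^r`
(`1 ≤ r < ∞`) and converges in the sense of distributions to some locally integrable `g`.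
Then either `g = 0` a.e., or `g` is a.e. equal to a nonzero element of `𝒢_ν` and moreover
`‖g_k − g‖_{L^s} → 0` for every `1 ≤ s ≤ ∞`. -/
theorem gaussianPolyPacket_dichotomy
    (d : ℕ) (hd : 1 ≤ d) (ν : Fin d → ℕ) (r : ℝ≥0∞) (hr : 1 ≤ r) (hr_top : r ≠ ∞)
    (g : ℕ → (Fin d → ℝ) → ℂ) (hgk : ∀ k, g k ∈ GaussianPolyPacket d ν)
    (hbound : ∃ C : ℝ≥0∞, C < ∞ ∧ ∀ k,
      eLpNorm (g k) r (volume : Measure (Fin d → ℝ)) ≤ C)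
    (g' : (Fin d → ℝ) → ℂ)
    (hloc : LocallyIntegrable g' (volume : Measure (Fin d → ℝ)))
    (hdistrib : ∀ φ : (Fin d → ℝ) → ℂ, ContDiff ℝ (⊤ : ℕ∞) φ → HasCompactSupport φ →
      Tendsto (fun k => ∫ x : Fin d → ℝ, g k x * φ x) atTop
        (nhds (∫ x : Fin d → ℝ, g' x * φ x))) :
    (g' =ᵐ[(volume : Measure (Fin d → ℝ))] (0 : (Fin d → ℝ) → ℂ)) ∨
    (∃ h ∈ GaussianPolyPacket d ν, h ≠ 0 ∧
      g' =ᵐ[(volume : Measure (Fin d → ℝ))] h ∧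
      ∀ s : ℝ≥0∞, 1 ≤ s →
        Tendsto (fun k => eLpNorm (fun x => g k x - g' x) s (volume : Measure (Fin d → ℝ)))
          atTop (nhds 0)) := by
  obtain ⟨C, hC, hbound⟩ := hbound
  refine or_iff_not_imp_left.mpr fun hg'0 => ?_
  obtain ⟨-, h, -, hh, hg'h, -⟩ :=
    exists_subseq_tendsto_eLpNorm_sub hr hr_top hgk hC.ne hbound hloc hdistrib hg'0
  refine ⟨h, hh, ?_, hg'h, fun s _ => tendsto_of_subseq_tendsto fun n hn => ?_⟩
  · rintro rfl
    exact hg'0 hg'h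
  · obtain ⟨φ, -, -, -, -, hlim⟩ := exists_subseq_tendsto_eLpNorm_sub hr hr_top (fun k => hgk (n k))
      hC.ne (fun k => hbound (n k)) hloc (TendstoDistrib.comp hdistrib hn) hg'0
    exact ⟨φ, hlim s⟩
end
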